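/- Let Θ'_{w_{q'},x_{q'},β}(h(t)), β ∈ ℕ^{n-1}, be the components of a reflection function associated with a C^∞ CR diffeomorphism h and a converging defining series z̄' = Σ_β (w̄')^β Θ'_{w_{q'},x_{q'},β}(t') for M', and assume that each component extends as a holomorphic function φ'_{w_{q'},x_{q'},β}(t) in a neighborhood of 0, so that the formal power series h_F(t) of h at 0 satisfies Θ'_{w_{q'},x_{q'},β}(h_F(t)) ≡ φ'_{w_{q'},x_{q'},β}(t) for all β. Then there exist constants C₀ > 0 and r₀ > 0 such that |φ'_{w_{q'},x_{q'},β}(t)| < C₀^{|β|+1} for all |t| < r₀ and all β ∈ ℕ^{n-1}. -/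

import Mathlib

/-!
Common definitions: CR geometry of real analytic hypersurfaces in `ℂⁿ`,
following J. Merker, "On envelopes of holomorphy of domains with Levi-flat
hats and the reflection principle".

We model `ℂⁿ` with `n = m + 1` as `CS m := (Fin m → ℂ) × ℂ`, with coordinates
`t = (w, z)`; the sup-norm balls of this product are polydiscs.
-/

noncomputable section

open Complex Topology Filter Metric Set

abbrev CS (m : ℕ) : Type := (Fin m → ℂ) × ℂ

section Basic

variable {E F : Type*} [NormedAddCommGroup E] [NormedSpace ℂ E]
  [NormedAddCommGroup F] [NormedSpace ℂ F]

/-- `v` is a real tangent vector to the set `M` at `q`: every real-differentiable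
function vanishing on `M` near `q` has differential annihilating `v`. -/
def TangentAt (M : Set E) (q v : E) : Prop :=
  ∀ ρ : E → ℝ, DifferentiableAt ℝ ρ q → (∀ᶠ z in 𝓝 q, z ∈ M → ρ z = 0) →
    fderiv ℝ ρ q v = 0

/-- `v` is a complex tangent vector to `M` at `q` (i.e. `v ∈ T^c_q M`). -/
def ComplexTangentAt (M : Set E) (q v : E) : Prop :=
  TangentAt M q v ∧ TangentAt M q (Complex.I • v)

/-- `M` is a real analytic real hypersurface: near each of its points it is the
zero set of a real analytic real-valued function with nonvanishing differential. -/
def IsRealAnalyticHypersurface (M : Set E) : Prop :=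
  M.Nonempty ∧ ∀ p ∈ M, ∃ (U : Set E) (ρ : E → ℝ), IsOpen U ∧ p ∈ U ∧
    AnalyticOnNhd ℝ ρ U ∧ fderiv ℝ ρ p ≠ 0 ∧ M ∩ U = {z ∈ U | ρ z = 0}

/-- A set `N ⊆ E` is generic in `E`: `T_q N + i T_q N = E` at each `q ∈ N`. -/
def IsGenericSet (N : Set E) : Prop :=
  ∀ q ∈ N, ∀ v : E, ∃ a b : E, TangentAt N q a ∧ TangentAt N q b ∧
    v = a + Complex.I • b

/-- The antiholomorphic part `∂̄f(q)(v)` of the real differential of `f` at `q`. -/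
def antiCDeriv (f : E → ℂ) (q v : E) : ℂ :=
  (fderiv ℝ f q v + Complex.I * fderiv ℝ f q (Complex.I • v)) / 2

/-- `f` is a CR function of class `C^k` on the hypersurface `M`: locally it has
`C^k` extensions whose antiholomorphic differential annihilates the complex
tangent spaces of `M`. -/
def IsCRFunctionOn (k : ℕ∞) (M : Set E) (f : E → ℂ) : Prop :=
  ∀ p ∈ M, ∃ (U : Set E) (g : E → ℂ), IsOpen U ∧ p ∈ U ∧
    ContDiffOn ℝ k g U ∧ (∀ z ∈ M ∩ U, g z = f z) ∧
    ∀ q ∈ M ∩ U, ∀ v : E, ComplexTangentAt M q v → antiCDeriv g q v = 0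

/-- `h` is a CR mapping of class `C^k` from `M` to `M'`. -/
def IsCRMapOn (k : ℕ∞) (M : Set E) (M' : Set F) (h : E → F) : Prop :=
  Set.MapsTo h M M' ∧ ∀ ℓ : F →L[ℂ] ℂ, IsCRFunctionOn k M fun z => ℓ (h z)

/-- `h` is a CR diffeomorphism of class `C^k` from `M` onto `M'`. -/
def IsCRDiffeoOn (k : ℕ∞) (M : Set E) (M' : Set F) (h : E → F) : Prop :=
  IsCRMapOn k M M' h ∧ Set.BijOn h M M' ∧
    ∃ g : F → E, IsCRMapOn k M' M g ∧ ∀ z ∈ M, g (h z) = z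

/-- `f` is a CR function of class `C^{1,α}` on `M`. -/
def IsCRFunctionC1HolderOn (α : NNReal) (M : Set E) (f : E → ℂ) : Prop :=
  ∀ p ∈ M, ∃ (U : Set E) (g : E → ℂ), IsOpen U ∧ p ∈ U ∧
    ContDiffOn ℝ 1 g U ∧
    (∃ C : NNReal, HolderOnWith C α (fderivWithin ℝ g U) U) ∧
    (∀ z ∈ M ∩ U, g z = f z) ∧
    ∀ q ∈ M ∩ U, ∀ v : E, ComplexTangentAt M q v → antiCDeriv g q v = 0

/-- `h` is a CR mapping of class `C^{1,α}` from `M` to `M'`. -/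
def IsCRMapC1HolderOn (α : NNReal) (M : Set E) (M' : Set F) (h : E → F) : Prop :=
  Set.MapsTo h M M' ∧ ∀ ℓ : F →L[ℂ] ℂ, IsCRFunctionC1HolderOn α M fun z => ℓ (h z)

/-- `h` is a CR diffeomorphism of class `C^{1,α}` from `M` onto `M'`. -/
def IsCRDiffeoC1HolderOn (α : NNReal) (M : Set E) (M' : Set F) (h : E → F) : Prop :=
  IsCRMapC1HolderOn α M M' h ∧ Set.BijOn h M M' ∧
    ∃ g : F → E, IsCRMapC1HolderOn α M' M g ∧ ∀ z ∈ M, g (h z) = z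

/-- There is a germ of a (possibly singular) complex hypersurface through `q`
contained in `M`. -/
def HasComplexHypersurfaceGermIn (M : Set E) (q : E) : Prop :=
  ∃ (U : Set E) (f : E → ℂ), IsOpen U ∧ q ∈ U ∧ DifferentiableOn ℂ f U ∧
    f q = 0 ∧ ¬ (∀ᶠ z in 𝓝 q, f z = 0) ∧ {z ∈ U | f z = 0} ⊆ M

/-- `M` is minimal in the sense of Tumanov at `q`: no germ of a complex
hypersurface through `q` is contained in `M`. -/
def MinimalAt (M : Set E) (q : E) : Prop := ¬ HasComplexHypersurfaceGermIn M q

/-- `M` is holomorphically nondegenerate: there is no holomorphic vector field,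
defined and not identically zero near some point of `M`, tangent to `M`. -/
def HolomorphicallyNondegenerate (M : Set E) : Prop :=
  ¬ ∃ (U : Set E) (X : E → E) (q : E), IsOpen U ∧ q ∈ M ∩ U ∧
      DifferentiableOn ℂ X U ∧ ¬ (∀ᶠ z in 𝓝 q, X z = 0) ∧
      ∀ z ∈ M ∩ U, ComplexTangentAt M z (X z)

/-- There exist `d` holomorphic vector fields tangent to `M`, defined near some
point of `M` and linearly independent at that (generic) point. -/
def HolDegDegreeGE (M : Set E) (d : ℕ) : Prop :=
  ∃ (U : Set E) (X : Fin d → E → E) (q : E), IsOpen U ∧ q ∈ M ∩ U ∧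
    (∀ i, DifferentiableOn ℂ (X i) U) ∧
    (∀ i, ∀ z ∈ M ∩ U, ComplexTangentAt M z (X i z)) ∧
    LinearIndependent ℂ fun i => X i q

/-- The holomorphic degeneracy degree of `M` equals `κ`. -/
def HolDegDegree (M : Set E) (κ : ℕ) : Prop :=
  HolDegDegreeGE M κ ∧ ¬ HolDegDegreeGE M (κ + 1)

/-- Near `b`, the set `A` is a complex submanifold of complex codimension `c`. -/
def IsComplexSubmanifoldAt (A : Set E) (b : E) (c : ℕ) : Prop :=
  ∃ (W : Set E) (f : E → Fin c → ℂ), IsOpen W ∧ b ∈ W ∧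
    DifferentiableOn ℂ f W ∧ A ∩ W = {z ∈ W | f z = 0} ∧
    Function.Surjective ⇑(fderiv ℂ f b)

/-- `A` is a closed complex analytic subset of the open set `Ω`. -/
def IsAnalyticSubsetOf (Ω A : Set E) : Prop :=
  A ⊆ Ω ∧ closure A ∩ Ω ⊆ A ∧
    ∀ a ∈ Ω, ∃ (W : Set E) (N : ℕ) (f : E → Fin N → ℂ), IsOpen W ∧ a ∈ W ∧
      W ⊆ Ω ∧ DifferentiableOn ℂ f W ∧ A ∩ W = {z ∈ W | f z = 0}

/-- `A` is a complex analytic subset of `Ω` of pure complex codimension `c`: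
its regular points are dense in it, and they all have codimension `c`. -/
def IsPureCodimAnalyticSubsetOf (Ω A : Set E) (c : ℕ) : Prop :=
  IsAnalyticSubsetOf Ω A ∧
  (∀ a ∈ A, ∀ V ∈ 𝓝 a, ∃ b ∈ A ∩ V, IsComplexSubmanifoldAt A b c) ∧
  (∀ b ∈ A, ∀ c' : ℕ, IsComplexSubmanifoldAt A b c' → c' = c)

/-- `S` is a `C^∞`-smooth real hypersurface of the open set `Ω`. -/
def IsSmoothHypersurfaceIn (Ω S : Set E) : Prop :=
  S ⊆ Ω ∧ ∀ q ∈ S, ∃ (U : Set E) (ρ : E → ℝ), IsOpen U ∧ q ∈ U ∧ U ⊆ Ω ∧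
    ContDiffOn ℝ (⊤ : ℕ∞) ρ U ∧ (∀ z ∈ U, fderiv ℝ ρ z ≠ 0) ∧
    S ∩ U = {z ∈ U | ρ z = 0}

/-- A smooth real hypersurface is Levi-flat iff it is foliated by complex
hypersurfaces, i.e. through each of its points there passes a germ of a
complex hypersurface contained in it. -/
def IsLeviFlat (S : Set E) : Prop :=
  ∀ q ∈ S, HasComplexHypersurfaceGermIn S q

/-- `f` is of class `C^{1,β}` on `s`. -/
def IsC1HolderOn {X Y : Type*} [NormedAddCommGroup X] [NormedSpace ℝ X]
    [NormedAddCommGroup Y] [NormedSpace ℝ Y] (β : NNReal) (f : X → Y)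
    (s : Set X) : Prop :=
  ContDiffOn ℝ 1 f s ∧ ∃ C : NNReal, HolderOnWith C β (fderivWithin ℝ f s) s

/-- A continuous CR function on a smooth hypersurface `S`: continuous on `S`
and locally a uniform limit on `S` of holomorphic functions
(Baouendi–Trèves characterization). -/
def ContinuousCRFunctionOn (S : Set E) (ψ : E → ℂ) : Prop :=
  ContinuousOn ψ S ∧ ∀ p ∈ S, ∃ U : Set E, IsOpen U ∧ p ∈ U ∧
    ∃ Fs : ℕ → E → ℂ, (∀ k, DifferentiableOn ℂ (Fs k) U) ∧
      TendstoUniformlyOn (fun k => Fs k) ψ atTop (S ∩ U)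

end Basic

section Series

variable {m : ℕ}

/-- Total degree of a multiindex `β ∈ ℕ^m`. -/
def mdeg (β : Fin m → ℕ) : ℕ := ∑ i, β i

/-- Monomial `w^β`. -/
def mpow (w : Fin m → ℂ) (β : Fin m → ℕ) : ℂ := ∏ i, w i ^ β i

/-- Componentwise conjugation of `w ∈ ℂ^m`. -/
def conjW (w : Fin m → ℂ) : Fin m → ℂ := fun i => starRingEnd ℂ (w i)

/-- Componentwise conjugation on `ℂ^{m+1}`. -/
def conjCS (t : CS m) : CS m := (conjW t.1, starRingEnd ℂ t.2)

/-- The series `Θ(ζ, t) = Σ_β ζ^β Θ_β(t)`. -/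
def ThetaSum (Θ : (Fin m → ℕ) → CS m → ℂ) (ζ : Fin m → ℂ) (t : CS m) : ℂ :=
  ∑' β : Fin m → ℕ, mpow ζ β * Θ β t

/-- The conjugate series `Θ̄(w, τ) = Σ_β w^β conj(Θ_β(τ̄))`. -/
def ThetaBar (Θ : (Fin m → ℕ) → CS m → ℂ) (w : Fin m → ℂ) (τ : CS m) : ℂ :=
  ∑' β : Fin m → ℕ, mpow w β * starRingEnd ℂ (Θ β (conjCS τ))

/-- Defining data for a hypersurface through `0`: a family of coefficient
functions `Θ_β`, a radius `r` and a constant `C`. -/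
structure DefData (m : ℕ) where
  Θ : (Fin m → ℕ) → CS m → ℂ
  r : ℝ
  C : ℝ

/-- `d` is a normally convergent complex defining series for `M` near the
origin, i.e. in suitable holomorphic coordinates vanishing at the reference
point, `M = {(w, z) : z̄ = Θ(w̄, (w, z)) = Σ_β w̄^β Θ_β(w, z)}`, where the
coefficients are holomorphic on the polydisc of radius `2r` and satisfy the
normal-convergence Cauchy estimates `|Θ_β| ≤ C / (2r)^{|β|}` there, and the
series vanishes at the origin. -/
def DefData.IsDefiningSeriesOf (d : DefData m) (M : Set (CS m)) : Prop :=
  0 < d.r ∧ 0 < d.C ∧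
  (∀ β, DifferentiableOn ℂ (d.Θ β) (ball (0 : CS m) (2 * d.r))) ∧
  (∀ β, ∀ t ∈ ball (0 : CS m) (2 * d.r), ‖d.Θ β t‖ ≤ d.C / (2 * d.r) ^ mdeg β) ∧
  d.Θ 0 0 = 0 ∧
  ∀ t ∈ ball (0 : CS m) d.r,
    (t ∈ M ↔ starRingEnd ℂ t.2 = ThetaSum d.Θ (conjW t.1) t)

/-- The Segre variety `S_{q̄}` of a point `q`, inside the polydisc of radius
`r`: `S_{q̄} = {(w, z) : z = Σ_β w^β conj(Θ_β(q))}`. -/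
def segreVariety (Θ : (Fin m → ℕ) → CS m → ℂ) (r : ℝ) (q : CS m) : Set (CS m) :=
  {t ∈ ball (0 : CS m) r |
    t.2 = ∑' β : Fin m → ℕ, mpow t.1 β * starRingEnd ℂ (Θ β q)}

/-- The reflection function `R'_h(t, ν̄') = μ̄' - Σ_β λ̄'^β Θ'_β(h(t))` extends
holomorphically to a neighborhood of `(p, p̄')` in `ℂⁿ × ℂⁿ`. -/
def ReflectionExtendsAt (Θ : (Fin m → ℕ) → CS m → ℂ) (h : CS m → CS m)
    (M : Set (CS m)) (p p' : CS m) : Prop :=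
  ∃ r > (0 : ℝ), ∃ R : CS m × CS m → ℂ,
    DifferentiableOn ℂ R (ball p r ×ˢ ball (conjCS p') r) ∧
    ∀ t ∈ M ∩ ball p r, ∀ ν ∈ ball (conjCS p') r,
      R (t, ν) = ν.2 - ∑' β : Fin m → ℕ, mpow ν.1 β * Θ β (h t)

/-- All the components `Θ_β ∘ h` of the reflection function extend
holomorphically to a common neighborhood of `q`, with uniform Cauchy
estimates `|Θ_β(h(t))| < C^{|β|+1}`; i.e. the reflection function is real
analytic at `q`. -/
def ReflectionAnalyticAt (Θ : (Fin m → ℕ) → CS m → ℂ) (h : CS m → CS m)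
    (M : Set (CS m)) (q : CS m) : Prop :=
  ∃ r C : ℝ, 0 < r ∧ 0 < C ∧ ∃ φ : (Fin m → ℕ) → CS m → ℂ,
    (∀ β, DifferentiableOn ℂ (φ β) (ball q r)) ∧
    (∀ β, ∀ t ∈ M ∩ ball q r, φ β t = Θ β (h t)) ∧
    ∀ β, ∀ t ∈ ball q r, ‖φ β t‖ < C ^ (mdeg β + 1)

end Series

section Jets

variable {m : ℕ}

/-- Partial derivative in the direction of the `i`-th `w`-coordinate. -/
def pderivW (i : Fin m) (f : CS m → ℂ) : CS m → ℂ :=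
  fun t => fderiv ℂ f t (Pi.single i 1, 0)

def pderivList : List (Fin m) → (CS m → ℂ) → CS m → ℂ
  | [], f => f
  | i :: L, f => pderivW i (pderivList L f)

def indexList (β : Fin m → ℕ) : List (Fin m) :=
  (List.finRange m).flatMap fun i => List.replicate (β i) i

/-- The iterated partial derivative `∂_w^β f`. -/
def pderivMulti (β : Fin m → ℕ) (f : CS m → ℂ) : CS m → ℂ :=
  pderivList (indexList β) f

/-- The morphism of `k`-jets of Segre varieties
`φ'_k : (t', τ') ↦ (t', (∂^β_{w'}[z' − Θ̄'(w', τ')](t'))_{|β| ≤ k})`, written in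
the holomorphic parametrization `(t, ζ) ↦ (t, (ζ, Θ(ζ, t)))` of the extrinsic
complexification `M^c`. -/
def segreJetMap (Θ : (Fin m → ℕ) → CS m → ℂ) (k : ℕ) :
    CS m × (Fin m → ℂ) → CS m × ((Fin m → Fin (k + 1)) → ℂ) :=
  fun p =>
    (p.1, fun β =>
      if mdeg (fun i => (β i : ℕ)) ≤ k then
        pderivMulti (fun i => (β i : ℕ))
          (fun s => s.2 - ThetaBar Θ s.1 (p.2, ThetaSum Θ p.2 p.1)) p.1
      else 0)

/-- The rank of the differential of a map at a point. -/
def mapRankAt {X Y : Type*} [NormedAddCommGroup X] [NormedSpace ℂ X]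
    [NormedAddCommGroup Y] [NormedSpace ℂ Y] (f : X → Y) (p : X) : ℕ :=
  Module.finrank ℂ (LinearMap.range (fderiv ℂ f p).toLinearMap)

/-- Parameter domain for the complexification. -/
def segreDomain (m : ℕ) (r : ℝ) : Set (CS m × (Fin m → ℂ)) :=
  {p | ‖p.1‖ < r ∧ ‖p.2‖ < r}

/-- The morphism of `k`-jets of Segre varieties has generic rank `ρ`. -/
def SegreGenericRank (Θ : (Fin m → ℕ) → CS m → ℂ) (r : ℝ) (k ρ : ℕ) : Prop :=
  (∀ p ∈ segreDomain m r, mapRankAt (segreJetMap Θ k) p ≤ ρ) ∧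
  ∃ p ∈ segreDomain m r, mapRankAt (segreJetMap Θ k) p = ρ

/-- The `k`-jet morphism has locally constant rank `ρ` in a neighborhood of the
point of the complexification corresponding to `(q, q̄)`. -/
def SegreConstRankNear (Θ : (Fin m → ℕ) → CS m → ℂ) (k ρ : ℕ) (q : CS m) : Prop :=
  ∀ᶠ p in 𝓝 (q, conjW q.1), mapRankAt (segreJetMap Θ k) p = ρ

/-- Normal form of a defining series with respect to the splitting
`t' = (w', v', z') ∈ ℂ^a × ℂ^{m-a} × ℂ`: the series involves no `v̄'` and its
coefficients are independent of `v'`. -/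
def NormalFormSeries (a : ℕ) (Θ : (Fin m → ℕ) → CS m → ℂ) : Prop :=
  (∀ β : Fin m → ℕ, (∃ i : Fin m, a ≤ (i : ℕ) ∧ β i ≠ 0) → Θ β = 0) ∧
  ∀ β, ∀ s t : CS m, (∀ i : Fin m, (i : ℕ) < a → s.1 i = t.1 i) → s.2 = t.2 →
    Θ β s = Θ β t

def extendIdx (m a : ℕ) (β : Fin a → ℕ) : Fin m → ℕ :=
  fun i => if h : (i : ℕ) < a then β ⟨i, h⟩ else 0

def embedCS (m a : ℕ) (t : CS a) : CS m :=
  ((fun i => if h : (i : ℕ) < a then t.1 ⟨i, h⟩ else 0), t.2)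

/-- The defining series of the reduced hypersurface `M̲' ⊆ ℂ^{a+1}` underlying
a series in normal form. -/
def reducedSeries (m a : ℕ) (Θ : (Fin m → ℕ) → CS m → ℂ) :
    (Fin a → ℕ) → CS a → ℂ :=
  fun β t => Θ (extendIdx m a β) (embedCS m a t)

end Jets

section HolomorphicTools

variable {E : Type*} [NormedAddCommGroup E] [NormedSpace ℂ E]

/-- Cauchy estimate for the Fréchet derivative. -/
lemma aux_cauchy_fderiv {f : E → ℂ} {x : E} {r C : ℝ} (hr : 0 < r)
    (hd : ∀ y ∈ closedBall x r, DifferentiableAt ℂ f y)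
    (hC : ∀ y ∈ closedBall x r, ‖f y‖ ≤ C) : ‖fderiv ℂ f x‖ ≤ C / r := by
  have hC0 : 0 ≤ C := (norm_nonneg _).trans (hC x (mem_closedBall_self hr.le))
  refine ContinuousLinearMap.opNorm_le_bound _ (by positivity) fun v => ?_
  by_cases hv : v = 0
  · simp [hv]
  have hv' : 0 < ‖v‖ := norm_pos_iff.mpr hv
  have hmem : ∀ z ∈ closedBall (0 : ℂ) (r / ‖v‖), x + z • v ∈ closedBall x r := by
    intro z hz
    rw [mem_closedBall_zero_iff, le_div_iff₀ hv'] at hz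
    simpa [mem_closedBall, dist_eq_norm, norm_smul] using hz
  have hg : ∀ z ∈ closedBall (0 : ℂ) (r / ‖v‖),
      DifferentiableAt ℂ (fun z : ℂ => f (x + z • v)) z := by
    intro z hz
    exact DifferentiableAt.comp z (hd _ (hmem z hz)) (by fun_prop)
  have h1 : HasDerivAt (fun z : ℂ => f (x + z • v)) (fderiv ℂ f x v) 0 := by
    have h2 : HasFDerivAt f (fderiv ℂ f x) (x + (0 : ℂ) • v) := by
      simpa using (hd x (mem_closedBall_self hr.le)).hasFDerivAt
    have h3 : HasDerivAt (fun z : ℂ => x + z • v) v 0 := by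
      simpa using ((hasDerivAt_id (0 : ℂ)).smul_const v).const_add x
    exact h2.comp_hasDerivAt (0 : ℂ) h3
  have h4 := Complex.norm_deriv_le_of_forall_mem_sphere_norm_le (c := (0 : ℂ)) (R := r / ‖v‖) (C := C)
    (f := fun z : ℂ => f (x + z • v)) (by positivity)
    (DifferentiableOn.diffContOnCl (by
      intro z hz
      exact (hg z (closure_ball_subset_closedBall hz)).differentiableWithinAt))
    (fun z hz => hC _ (hmem z (sphere_subset_closedBall hz)))
  rw [h1.deriv] at h4
  calc _ ≤ _ := h4
    _ = _ := by field_simp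

/-- An analytic function which is `O(ζ^p)` along some filter is divisible by `ζ^p`. -/
lemma aux_order {V : ℂ → E} (hV : AnalyticAt ℂ V 0) {l : Filter ℂ} [l.NeBot]
    (hl : l ≤ 𝓝[≠] 0) {p : ℕ} (hO : V =O[l] fun ζ => ζ ^ p) :
    ∃ g : ℂ → E, AnalyticAt ℂ g 0 ∧ ∀ᶠ z in 𝓝 (0 : ℂ), V z = z ^ p • g z := by
  have hl0 : l ≤ 𝓝 0 := hl.trans nhdsWithin_le_nhds
  have hne : ∀ᶠ z in l, z ≠ 0 := hl self_mem_nhdsWithin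
  suffices h : (p : ℕ∞) ≤ analyticOrderAt V 0 by
    simpa using (natCast_le_analyticOrderAt hV).mp h
  by_contra hlt
  push Not at hlt
  obtain ⟨k, hk⟩ := ENat.ne_top_iff_exists.mp (ne_top_of_lt hlt)
  rw [← hk] at hlt
  have hkp : k < p := by exact_mod_cast hlt
  obtain ⟨g, hg, hg0, hgV⟩ := (hV.analyticOrderAt_eq_natCast).mp hk.symm
  have h1 : g =O[l] fun ζ => ζ ^ (p - k) := by
    have h2 : (fun z : ℂ => (z ^ k)⁻¹ • V z) =O[l] fun z => (z ^ k)⁻¹ • z ^ p :=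
      (Asymptotics.isBigO_refl _ _).smul hO
    refine (h2.congr' ?_ ?_)
    · filter_upwards [hl0 hgV, hne] with z hz hz0
      rw [hz, sub_zero, smul_smul, inv_mul_cancel₀ (pow_ne_zero _ hz0), one_smul]
    · filter_upwards [hne] with z hz0
      rw [smul_eq_mul, pow_sub₀ _ hz0 hkp.le, mul_comm]
  have h2 : Tendsto g l (𝓝 0) := by
    refine h1.trans_tendsto ?_
    have : Tendsto (fun ζ : ℂ => ζ ^ (p - k)) (𝓝 0) (𝓝 (0 ^ (p - k))) :=
      (continuous_pow _).tendsto _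
    rw [zero_pow (by omega)] at this
    exact this.mono_left hl0
  exact hg0 (tendsto_nhds_unique (hg.continuousAt.tendsto.mono_left hl0) h2)

variable [FiniteDimensional ℂ E]

/-- Circle integrals depending holomorphically on a parameter. -/
lemma aux_param_circle {K : E → ℂ → ℂ} {x₀ : E} {R r : ℝ} (hR : 0 < R) (hr : 0 < r)
    (hc : ContinuousOn (fun p : E × ℂ => K p.1 p.2) (ball x₀ R ×ˢ sphere 0 r))
    (hd : ∀ ξ ∈ sphere (0 : ℂ) r, DifferentiableOn ℂ (fun x => K x ξ) (ball x₀ R)) :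
    DifferentiableAt ℂ (fun x => ∮ ξ in C(0, r), K x ξ) x₀ := by
  have : ProperSpace E := FiniteDimensional.proper ℂ E
  have hcomp : IsCompact (closedBall x₀ (R / 2) ×ˢ sphere (0 : ℂ) r) :=
    (isCompact_closedBall _ _).prod (isCompact_sphere _ _)
  have hsub : closedBall x₀ (R / 2) ×ˢ sphere (0 : ℂ) r ⊆ ball x₀ R ×ˢ sphere (0 : ℂ) r :=
    prod_mono (closedBall_subset_ball (by linarith)) le_rfl
  have hc' := hc.mono hsub
  obtain ⟨C, hC⟩ := hcomp.exists_bound_of_continuousOn hc'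
  have huc := hcomp.uniformContinuousOn_of_continuous hc'
  have hdat : ∀ ξ ∈ sphere (0 : ℂ) r, ∀ x ∈ ball x₀ R,
      DifferentiableAt ℂ (fun x => K x ξ) x := fun ξ hξ x hx =>
    (hd ξ hξ).differentiableAt (isOpen_ball.mem_nhds hx)
  have hcm : ∀ θ, circleMap 0 r θ ∈ sphere (0 : ℂ) r := fun θ => circleMap_mem_sphere 0 hr.le θ
  -- continuity of the derivative in the circle parameter
  have hFc : Continuous (fun θ : ℝ => fderiv ℂ (fun x => K x (circleMap 0 r θ)) x₀) := by
    rw [Metric.continuous_iff]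
    intro θ₀ ε hε
    rw [Metric.uniformContinuousOn_iff] at huc
    obtain ⟨δ, hδ, h⟩ := huc (ε / 2 * (R / 2)) (by positivity)
    have hcont := (Metric.continuous_iff.mp (continuous_circleMap 0 r)) θ₀ δ hδ
    obtain ⟨η, hη, h'⟩ := hcont
    refine ⟨η, hη, fun θ hθ => ?_⟩
    rw [dist_eq_norm, ← fderiv_sub (hdat _ (hcm θ) _ (mem_ball_self hR))
      (hdat _ (hcm θ₀) _ (mem_ball_self hR))]
    refine lt_of_le_of_lt (aux_cauchy_fderiv (r := R / 2) (C := ε / 2 * (R / 2)) (by positivity)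
      ?_ ?_) ?_
    · intro y hy
      have hy' := closedBall_subset_ball (show R / 2 < R by linarith) hy
      exact (hdat _ (hcm θ) _ hy').sub (hdat _ (hcm θ₀) _ hy')
    · intro y hy
      have := h (y, circleMap 0 r θ) ⟨hy, hcm θ⟩ (y, circleMap 0 r θ₀) ⟨hy, hcm θ₀⟩ (by
        rw [Prod.dist_eq]; simpa [hδ] using h' θ hθ)
      rw [dist_eq_norm] at this
      exact this.le
    · rw [mul_div_assoc, div_self (by positivity)]; linarith
  have hKc : ∀ x ∈ ball x₀ R, Continuous (fun θ : ℝ => K x (circleMap 0 r θ)) := by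
    intro x hx
    refine hc.comp_continuous (f := fun θ : ℝ => (x, circleMap 0 r θ)) (by fun_prop)
      (fun θ => ⟨hx, hcm θ⟩)
  have hdc : Continuous (fun θ : ℝ => deriv (circleMap 0 r) θ) := by
    simp only [deriv_circleMap]; fun_prop
  have hdn : ∀ θ : ℝ, ‖deriv (circleMap 0 r) θ‖ = r := by
    intro θ; simp [deriv_circleMap, abs_of_pos hr]
  have key := intervalIntegral.hasFDerivAt_integral_of_dominated_of_fderiv_le
    (𝕜 := ℂ) (μ := MeasureTheory.volume) (a := 0) (b := 2 * Real.pi)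
    (bound := fun _ => r * (C / (R / 4)))
    (F := fun (x : E) (θ : ℝ) => deriv (circleMap 0 r) θ • K x (circleMap 0 r θ))
    (F' := fun (x : E) (θ : ℝ) => deriv (circleMap 0 r) θ •
      fderiv ℂ (fun x => K x (circleMap 0 r θ)) x)
    (x₀ := x₀) (s := ball x₀ (R / 4)) (ball_mem_nhds _ (by positivity))
    (by
      filter_upwards [ball_mem_nhds x₀ hR] with x hx
      exact (hdc.smul (hKc x hx)).aestronglyMeasurable)
    ((hdc.smul (hKc x₀ (mem_ball_self hR))).intervalIntegrable _ _)
    ((hdc.smul hFc).aestronglyMeasurable)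
    (by
      refine Eventually.of_forall fun θ _ x hx => ?_
      rw [norm_smul, hdn]
      gcongr
      have hsub2 : closedBall x (R / 4) ⊆ closedBall x₀ (R / 2) := by
        apply closedBall_subset_closedBall'
        have := mem_ball.mp hx
        linarith
      refine aux_cauchy_fderiv (by positivity) ?_ ?_
      · intro y hy
        exact hdat _ (hcm θ) _ (closedBall_subset_ball (by linarith) (hsub2 hy))
      · intro y hy
        exact hC (y, circleMap 0 r θ) ⟨hsub2 hy, hcm θ⟩)
    (by simp)
    (by
      refine Eventually.of_forall fun θ _ x hx => ?_
      exact ((hdat _ (hcm θ) x (ball_subset_ball (by linarith) hx)).hasFDerivAt).const_smul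
        (deriv (circleMap 0 r) θ))
  exact key.differentiableAt

/-- Directional derivatives of holomorphic functions are holomorphic. -/
lemma aux_dderiv {f : E → ℂ} {U : Set E} (hU : IsOpen U) (hf : DifferentiableOn ℂ f U) (v : E) :
    DifferentiableOn ℂ (fun x => fderiv ℂ f x v) U := by
  intro x₀ hx₀
  refine DifferentiableAt.differentiableWithinAt ?_
  obtain ⟨R, hR, hRU⟩ := Metric.isOpen_iff.mp hU x₀ hx₀
  obtain ⟨r, hr, hrv⟩ : ∃ r : ℝ, 0 < r ∧ r * ‖v‖ < R / 2 := by
    refine ⟨R / 2 / (‖v‖ + 1), by positivity, ?_⟩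
    rw [div_mul_eq_mul_div, div_lt_iff₀ (by positivity)]
    nlinarith [norm_nonneg v]
  have hmem : ∀ x ∈ ball x₀ (R / 2), ∀ ξ ∈ closedBall (0 : ℂ) r, x + ξ • v ∈ U := by
    intro x hx ξ hξ
    apply hRU
    rw [mem_ball, dist_eq_norm] at hx ⊢
    rw [mem_closedBall_zero_iff] at hξ
    calc ‖x + ξ • v - x₀‖ = ‖(x - x₀) + ξ • v‖ := by congr 1; abel
      _ ≤ ‖x - x₀‖ + ‖ξ‖ * ‖v‖ := (norm_add_le _ _).trans (by rw [norm_smul])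
      _ ≤ ‖x - x₀‖ + r * ‖v‖ := by gcongr
      _ < R := by linarith
  have h1 : DifferentiableAt ℂ (fun x => ∮ ξ in C(0, r), ((ξ - 0) ^ 2)⁻¹ * f (x + ξ • v)) x₀ := by
    refine aux_param_circle (R := R / 2) (by positivity) hr ?_ ?_
    · refine ContinuousOn.mul ?_ ?_
      · refine ContinuousOn.inv₀ (by fun_prop) ?_
        rintro ⟨x, ξ⟩ ⟨_, hξ⟩
        simpa using ne_of_mem_sphere hξ hr.ne'
      · refine hf.continuousOn.comp (by fun_prop) ?_
        rintro ⟨x, ξ⟩ ⟨hx, hξ⟩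
        exact hmem x hx ξ (sphere_subset_closedBall hξ)
    · intro ξ hξ
      refine DifferentiableOn.const_mul ?_ _
      refine hf.comp (by fun_prop) ?_
      intro x hx
      exact hmem x hx ξ (sphere_subset_closedBall hξ)
  have h2 : ∀ x ∈ ball x₀ (R / 2), fderiv ℂ f x v =
      (2 * Real.pi * I : ℂ)⁻¹ • ∮ ξ in C(0, r), ((ξ - 0) ^ 2)⁻¹ * f (x + ξ • v) := by
    intro x hx
    have hxU : x ∈ U := by simpa using hmem x hx 0 (mem_closedBall_self hr.le)
    have h3 : HasDerivAt (fun z : ℂ => f (x + z • v)) (fderiv ℂ f x v) 0 := by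
      have h2 : HasFDerivAt f (fderiv ℂ f x) (x + (0 : ℂ) • v) := by
        simpa using (hf.differentiableAt (hU.mem_nhds hxU)).hasFDerivAt
      have h3 : HasDerivAt (fun z : ℂ => x + z • v) v 0 := by
        simpa using ((hasDerivAt_id (0 : ℂ)).smul_const v).const_add x
      exact h2.comp_hasDerivAt (0 : ℂ) h3
    have hUo : IsOpen {z : ℂ | x + z • v ∈ U} := hU.preimage (by fun_prop)
    have h4 := Complex.two_pi_I_inv_smul_circleIntegral_sub_sq_inv_smul_of_differentiable
      hUo (c := 0) (w₀ := 0) (R := r) (f := fun z : ℂ => f (x + z • v))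
      (fun z hz => hmem x hx z hz)
      (hf.comp (by fun_prop) (fun z hz => hz)) (mem_ball_self hr)
    rw [h3.deriv] at h4
    rw [← h4]
    rfl
  refine (h1.const_smul ((2 * Real.pi * I : ℂ)⁻¹)).congr_of_eventuallyEq ?_
  filter_upwards [ball_mem_nhds x₀ (show 0 < R / 2 by positivity)] with x hx
  exact h2 x hx

/-- Division by a power of the first variable. -/
lemma aux_div {F : ℂ × E → ℂ} {R : ℝ} (hR : 0 < R) (hF : DifferentiableOn ℂ F (ball 0 R)) (n : ℕ)
    (hO : ∀ y ∈ ball (0 : E) R, (fun ζ : ℂ => F (ζ, y)) =O[𝓝[≠] 0] fun ζ : ℂ => ζ ^ n) :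
    ∃ Q : ℂ × E → ℂ, DifferentiableOn ℂ Q (ball 0 (R / 2)) ∧
      ∀ x ∈ ball (0 : ℂ × E) (R / 2), F x = x.1 ^ n * Q x := by
  set r := R / 2 with hr
  have hr0 : 0 < r := by positivity
  have hmem : ∀ ζ : ℂ, ∀ y : E, ‖ζ‖ < R → ‖y‖ < R → (ζ, y) ∈ ball (0 : ℂ × E) R := by
    intro ζ y h1 h2
    rw [mem_ball_zero_iff, Prod.norm_def]; exact max_lt h1 h2
  refine ⟨fun x => (2 * Real.pi * I : ℂ)⁻¹ • ∮ ξ in C(0, r), (ξ - x.1)⁻¹ • ((ξ ^ n)⁻¹ * F (ξ, x.2)),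
    ?_, ?_⟩
  · intro x₀ hx₀
    refine DifferentiableAt.differentiableWithinAt ?_
    suffices hcs : DifferentiableAt ℂ (fun x : ℂ × E => ∮ ξ in C(0, r), (ξ - x.1)⁻¹ • ((ξ ^ n)⁻¹ * F (ξ, x.2))) x₀ from
      hcs.const_smul ((2 * Real.pi * I : ℂ)⁻¹)
    rw [mem_ball_zero_iff] at hx₀
    have hsub : ∀ x ∈ ball x₀ (r - ‖x₀‖), ‖x‖ < r := by
      intro x hx
      rw [mem_ball, dist_eq_norm] at hx
      have := norm_sub_norm_le x x₀
      linarith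
    have hξ1 : ∀ x ∈ ball x₀ (r - ‖x₀‖), ∀ ξ ∈ sphere (0 : ℂ) r, ξ - x.1 ≠ 0 := by
      intro x hx ξ hξ h0
      have h1 := hsub x hx
      rw [mem_sphere_zero_iff_norm] at hξ
      rw [sub_eq_zero] at h0
      have := norm_fst_le x
      rw [← h0] at this
      linarith
    have hξ2 : ∀ x ∈ ball x₀ (r - ‖x₀‖), ∀ ξ ∈ sphere (0 : ℂ) r, (ξ, x.2) ∈ ball (0 : ℂ × E) R := by
      intro x hx ξ hξ
      have h1 := hsub x hx
      rw [mem_sphere_zero_iff_norm] at hξ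
      have := norm_snd_le x
      exact hmem _ _ (by linarith) (by linarith)
    refine aux_param_circle (R := r - ‖x₀‖) (by linarith) hr0 ?_ ?_
    · refine ContinuousOn.mul ?_ (ContinuousOn.mul ?_ ?_)
      · refine ContinuousOn.inv₀ (by fun_prop) ?_
        rintro ⟨x, ξ⟩ ⟨hx, hξ⟩
        exact hξ1 x hx ξ hξ
      · refine ContinuousOn.inv₀ (by fun_prop) ?_
        rintro ⟨x, ξ⟩ ⟨hx, hξ⟩
        exact pow_ne_zero _ (ne_of_mem_sphere hξ hr0.ne')
      · refine hF.continuousOn.comp (by fun_prop) ?_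
        rintro ⟨x, ξ⟩ ⟨hx, hξ⟩
        exact hξ2 x hx ξ hξ
    · intro ξ hξ
      refine DifferentiableOn.mul ?_ (DifferentiableOn.const_mul ?_ _)
      · refine DifferentiableOn.inv (by fun_prop) ?_
        intro x hx
        exact hξ1 x hx ξ hξ
      · refine hF.comp (by fun_prop) ?_
        intro x hx
        exact hξ2 x hx ξ hξ
  · rintro ⟨ζ, y⟩ hx
    rw [mem_ball_zero_iff, Prod.norm_def, max_lt_iff] at hx
    obtain ⟨hζ, hy⟩ := hx
    simp only at hζ hy
    have hyR : ‖y‖ < R := by linarith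
    have hFy : DifferentiableOn ℂ (fun ξ : ℂ => F (ξ, y)) (ball 0 R) := by
      refine hF.comp (by fun_prop) ?_
      intro ξ hξ
      exact hmem _ _ (by simpa using hξ) hyR
    have han : AnalyticAt ℂ (fun ξ : ℂ => F (ξ, y)) 0 :=
      hFy.analyticAt (ball_mem_nhds _ hR)
    obtain ⟨g, hg, hgF⟩ := aux_order han (le_refl (𝓝[≠] (0 : ℂ))) (hO y (by simpa using hyR))
    set q : ℂ → ℂ := fun ξ => if ξ = 0 then g 0 else (ξ ^ n)⁻¹ * F (ξ, y) with hq
    have hqd : DifferentiableOn ℂ q (ball 0 R) := by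
      intro ξ hξ
      refine DifferentiableAt.differentiableWithinAt ?_
      by_cases h0 : ξ = 0
      · subst h0
        refine hg.differentiableAt.congr_of_eventuallyEq ?_
        filter_upwards [hgF] with z hz
        by_cases hz0 : z = 0
        · simp [hq, hz0]
        · simp only [hq, hz0, if_false, hz, smul_eq_mul]
          rw [← mul_assoc, inv_mul_cancel₀ (pow_ne_zero _ hz0), one_mul]
      · have h1 : DifferentiableAt ℂ (fun ξ : ℂ => (ξ ^ n)⁻¹ * F (ξ, y)) ξ := by
          refine DifferentiableAt.mul ?_ (hFy.differentiableAt (isOpen_ball.mem_nhds hξ))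
          exact DifferentiableAt.inv (by fun_prop) (pow_ne_zero _ h0)
        refine h1.congr_of_eventuallyEq ?_
        filter_upwards [isOpen_ne.mem_nhds h0] with z hz
        have hz' : z ≠ 0 := hz
        simp [hq, hz']
    have hcau := (hqd.diffContOnCl_ball (closedBall_subset_ball (show r < R by linarith))
      ).two_pi_i_inv_smul_circleIntegral_sub_inv_smul (w := ζ) (by simpa using hζ)
    have hcongr : (∮ ξ in C(0, r), (ξ - ζ)⁻¹ • ((ξ ^ n)⁻¹ * F (ξ, y))) =
        ∮ ξ in C(0, r), (ξ - ζ)⁻¹ • q ξ := by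
      refine circleIntegral.integral_congr hr0.le ?_
      intro ξ hξ
      have : ξ ≠ 0 := ne_of_mem_sphere hξ hr0.ne'
      simp [hq, this]
    simp only [hcongr]
    rw [hcau]
    by_cases h0 : ζ = 0
    · subst h0
      have := hgF.self_of_nhds
      simpa [hq] using this
    · simp only [hq, h0, if_false]
      rw [← mul_assoc, mul_inv_cancel₀ (pow_ne_zero _ h0), one_mul]

end HolomorphicTools


section FlatTools
set_option linter.unusedSectionVars false

/-- The punctured neighbourhood filter of the origin of the real line. -/
abbrev RL : Filter ℝ := 𝓝[≠] (0 : ℝ)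

/-- Functions vanishing to infinite order at the origin. -/
def FlatAt {E : Type*} [NormedAddCommGroup E] (w : ℝ → E) : Prop :=
  ∀ q : ℕ, w =O[RL] fun s : ℝ => s ^ q

/-- Functions of a real variable having a Taylor expansion at all orders. -/
def HasExp {E : Type*} [NormedAddCommGroup E] [NormedSpace ℂ E] (u : ℝ → E) : Prop :=
  ∀ q : ℕ, ∃ T : ℂ → E, AnalyticAt ℂ T 0 ∧
    (fun s : ℝ => u s - T s) =O[RL] fun s : ℝ => s ^ q

variable {E : Type*} [NormedAddCommGroup E] [NormedSpace ℂ E]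

lemma tendsto_ofReal_RL : Tendsto (fun s : ℝ => (s : ℂ)) RL (𝓝[≠] 0) := by
  refine tendsto_nhdsWithin_iff.mpr ⟨?_, ?_⟩
  · have : Tendsto (fun s : ℝ => (s : ℂ)) (𝓝 0) (𝓝 ((0 : ℝ) : ℂ)) :=
      Complex.continuous_ofReal.tendsto 0
    exact (by simpa using this : Tendsto (fun s : ℝ => (s : ℂ)) (𝓝 0) (𝓝 0)).mono_left
      nhdsWithin_le_nhds
  · filter_upwards [self_mem_nhdsWithin] with s hs
    simpa using hs

lemma tendsto_ofReal_RL0 : Tendsto (fun s : ℝ => (s : ℂ)) RL (𝓝 0) :=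
  tendsto_ofReal_RL.mono_right nhdsWithin_le_nhds

lemma tendsto_RL0 : Tendsto (fun s : ℝ => s) RL (𝓝 0) :=
  tendsto_id.mono_left nhdsWithin_le_nhds

lemma pow_isBigO_RL {p q : ℕ} (h : p ≤ q) :
    (fun s : ℝ => s ^ q) =O[RL] fun s : ℝ => s ^ p :=
  Asymptotics.IsBigO.of_bound 1 (by
    filter_upwards [tendsto_RL0 (ball_mem_nhds (0 : ℝ) one_pos)] with s hs
    have : ‖s‖ < 1 := by simpa using hs
    rw [one_mul, norm_pow, norm_pow]
    exact pow_le_pow_of_le_one (norm_nonneg s) this.le h)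

lemma ofReal_pow_isBigO {l : Filter ℝ} (p : ℕ) :
    (fun s : ℝ => (s : ℂ) ^ p) =O[l] fun s : ℝ => s ^ p :=
  Asymptotics.IsBigO.of_bound 1 (Eventually.of_forall fun s => by simp)

lemma pow_isBigO_ofReal {l : Filter ℝ} (p : ℕ) :
    (fun s : ℝ => s ^ p) =O[l] fun s : ℝ => (s : ℂ) ^ p :=
  Asymptotics.IsBigO.of_bound 1 (Eventually.of_forall fun s => by simp)

lemma pow_tendsto_RL (q : ℕ) : Tendsto (fun s : ℝ => s ^ (q + 1)) RL (𝓝 0) := by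
  have : Tendsto (fun s : ℝ => s ^ (q + 1)) (𝓝 0) (𝓝 (0 ^ (q + 1))) :=
    (continuous_pow _).tendsto _
  rw [zero_pow (by omega)] at this
  exact this.mono_left nhdsWithin_le_nhds

lemma aux_real_order {V : ℂ → E} (hV : AnalyticAt ℂ V 0) {p : ℕ}
    (hO : (fun s : ℝ => V s) =O[RL] fun s : ℝ => s ^ p) :
    ∃ g : ℂ → E, AnalyticAt ℂ g 0 ∧ ∀ᶠ z in 𝓝 (0 : ℂ), V z = z ^ p • g z := by
  refine aux_order hV (l := map (fun s : ℝ => (s : ℂ)) RL) tendsto_ofReal_RL ?_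
  rw [Asymptotics.isBigO_map]
  exact hO.trans (pow_isBigO_ofReal p)

lemma aux_smul_pow_isBigO {g : ℂ → E} (hg : AnalyticAt ℂ g 0) {V : ℂ → E} {p : ℕ}
    (h : ∀ᶠ z in 𝓝 (0 : ℂ), V z = z ^ p • g z) : V =O[𝓝 0] fun z : ℂ => z ^ p := by
  have h1 : (fun z : ℂ => z ^ p • g z) =O[𝓝 0] fun z : ℂ => z ^ p • (1 : ℂ) :=
    (Asymptotics.isBigO_refl _ _).smul (hg.continuousAt.isBigO_one ℂ)
  exact h1.congr' (h.mono fun z hz => hz.symm) (by simp)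

/-- A function of a real variable close to an analytic function `O(s^p)`. -/
lemma aux_to_real {V : ℂ → E} {p : ℕ} (h : V =O[𝓝 0] fun z : ℂ => z ^ p) :
    (fun s : ℝ => V s) =O[RL] fun s : ℝ => s ^ p :=
  (h.comp_tendsto tendsto_ofReal_RL0).trans (ofReal_pow_isBigO p)

lemma FlatAt.tendsto {w : ℝ → E} (h : FlatAt w) : Tendsto w RL (𝓝 0) :=
  (h 1).trans_tendsto (pow_tendsto_RL 0)

lemma FlatAt.div_pow {w : ℝ → E} (h : FlatAt w) (p : ℕ) :
    FlatAt fun s : ℝ => ((s : ℂ) ^ p)⁻¹ • w s := by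
  intro q
  have h1 : (fun s : ℝ => ((s : ℂ) ^ p)⁻¹ • w s) =O[RL]
      fun s : ℝ => ((s : ℂ) ^ p)⁻¹ • ((s : ℂ) ^ (q + p)) :=
    (Asymptotics.isBigO_refl _ _).smul ((h (q + p)).trans (pow_isBigO_ofReal _))
  refine (h1.congr' EventuallyEq.rfl ?_).trans (ofReal_pow_isBigO q)
  filter_upwards [self_mem_nhdsWithin] with s hs
  have : (s : ℂ) ≠ 0 := by simpa using hs
  rw [smul_eq_mul, pow_add, mul_comm, mul_assoc, mul_inv_cancel₀ (pow_ne_zero _ this), mul_one]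

lemma aux_div_pow {w : ℝ → E} {p q : ℕ} (h : w =O[RL] fun s : ℝ => s ^ (q + p)) :
    (fun s : ℝ => ((s : ℂ) ^ p)⁻¹ • w s) =O[RL] fun s : ℝ => s ^ q := by
  have h1 : (fun s : ℝ => ((s : ℂ) ^ p)⁻¹ • w s) =O[RL]
      fun s : ℝ => ((s : ℂ) ^ p)⁻¹ • ((s : ℂ) ^ (q + p)) :=
    (Asymptotics.isBigO_refl _ _).smul (h.trans (pow_isBigO_ofReal _))
  refine (h1.congr' EventuallyEq.rfl ?_).trans (ofReal_pow_isBigO q)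
  filter_upwards [self_mem_nhdsWithin] with s hs
  have : (s : ℂ) ≠ 0 := by simpa using hs
  rw [smul_eq_mul, pow_add, mul_comm, mul_assoc, mul_inv_cancel₀ (pow_ne_zero _ this), mul_one]

/-- The value at the origin of an approximant. -/
lemma aux_T_zero {u : ℝ → E} (hu : Tendsto u RL (𝓝 0)) {T : ℂ → E} (hT : AnalyticAt ℂ T 0) {q : ℕ}
    (h : (fun s : ℝ => u s - T s) =O[RL] fun s : ℝ => s ^ (q + 1)) : T 0 = 0 := by
  have h1 : Tendsto (fun s : ℝ => u s - T s) RL (𝓝 0) := h.trans_tendsto (pow_tendsto_RL q)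
  have h2 : Tendsto (fun s : ℝ => T s) RL (𝓝 (T 0)) :=
    hT.continuousAt.tendsto.comp tendsto_ofReal_RL0
  have h3 := hu.sub h1
  simp only [sub_sub_cancel, sub_zero] at h3
  exact tendsto_nhds_unique h2 h3

variable [FiniteDimensional ℂ E]

/-- Holomorphic functions are smooth. -/
lemma aux_contDiffOn {f : E → ℂ} {U : Set E} (hU : IsOpen U) (hf : DifferentiableOn ℂ f U) (n : ℕ) :
    ContDiffOn ℂ n f U := by
  induction n generalizing f with
  | zero => simpa using hf.continuousOn
  | succ n ih =>
    have := (contDiffOn_succ_iff_fderiv_of_isOpen (𝕜 := ℂ) (n := (n : WithTop ℕ∞)) (f := f) hU).mpr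
      ⟨hf, by simp, by
        rw [contDiffOn_clm_apply]
        intro v
        exact ih (aux_dderiv hU hf v)⟩
    exact_mod_cast this

lemma aux_contDiffAt {f : E → ℂ} {U : Set E} (hU : IsOpen U) (hf : DifferentiableOn ℂ f U) (n : ℕ)
    {x : E} (hx : x ∈ U) : ContDiffAt ℂ n f x :=
  (aux_contDiffOn hU hf n).contDiffAt (hU.mem_nhds hx)

/-- Local Lipschitz estimate at the origin. -/
lemma aux_lipschitz {f : E → ℂ} {ρ : ℝ} (hρ : 0 < ρ) (hf : DifferentiableOn ℂ f (ball 0 ρ)) :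
    ∃ K : ℝ, ∃ δ > 0, ∀ x ∈ ball (0 : E) δ, ∀ y ∈ ball (0 : E) δ, ‖f y - f x‖ ≤ K * ‖y - x‖ := by
  have h1 : ContDiffAt ℂ 1 f 0 := by
    exact_mod_cast aux_contDiffAt isOpen_ball hf 1 (mem_ball_self hρ)
  obtain ⟨K, t, ht, hK⟩ := (h1.hasStrictFDerivAt one_ne_zero).exists_lipschitzOnWith
  obtain ⟨δ, hδ, hs⟩ := Metric.mem_nhds_iff.mp ht
  refine ⟨K, δ, hδ, fun x hx y hy => ?_⟩
  have := hK.dist_le_mul y (hs hy) x (hs hx)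
  simpa [dist_eq_norm] using this

/-- Second order Taylor estimate at the origin. -/
lemma aux_taylor2 {f : E → ℂ} {ρ : ℝ} (hρ : 0 < ρ) (hf : DifferentiableOn ℂ f (ball 0 ρ)) :
    ∃ K : ℝ, ∃ δ > 0, ∀ x ∈ ball (0 : E) δ, ∀ y ∈ ball (0 : E) δ,
      ‖f y - f x - fderiv ℂ f x (y - x)‖ ≤ K * ‖y - x‖ ^ 2 := by
  have h2 : ContDiffAt ℂ 2 f 0 := by
    exact_mod_cast aux_contDiffAt isOpen_ball hf 2 (mem_ball_self hρ)
  have h1 : ContDiffAt ℂ 1 (fderiv ℂ f) 0 := h2.fderiv_right (by norm_num)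
  obtain ⟨K, t, ht, hK⟩ := (h1.hasStrictFDerivAt one_ne_zero).exists_lipschitzOnWith
  obtain ⟨δ, hδ, hs⟩ := Metric.mem_nhds_iff.mp (inter_mem ht (ball_mem_nhds (0 : E) hρ))
  refine ⟨K, δ, hδ, fun x hx y hy => ?_⟩
  have hseg : segment ℝ x y ⊆ ball (0 : E) δ := (convex_ball _ _).segment_subset hx hy
  have key := (convex_segment x y).norm_image_sub_le_of_norm_hasFDerivWithin_le (𝕜 := ℂ)
    (f := fun z => f z - fderiv ℂ f x z) (f' := fun z => fderiv ℂ f z - fderiv ℂ f x)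
    (C := K * ‖y - x‖) (x := x) (y := y)
    (fun z hz => by
      have hz' := (hs (hseg hz)).2
      exact (((hf.differentiableAt (isOpen_ball.mem_nhds hz')).hasFDerivAt).sub
        ((fderiv ℂ f x).hasFDerivAt)).hasFDerivWithinAt)
    (fun z hz => by
      have h3 := hK.dist_le_mul z (hs (hseg hz)).1 x (hs hx).1
      rw [dist_eq_norm, dist_eq_norm] at h3
      refine h3.trans ?_
      gcongr
      obtain ⟨a, b, ha, hb, hab, rfl⟩ := hz
      have : a • x + b • y - x = b • (y - x) := by
        rw [smul_sub]
        have : x = a • x + b • x := by rw [← add_smul, hab, one_smul]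
        nth_rewrite 2 [this]
        abel
      rw [this, norm_smul, Real.norm_of_nonneg hb]
      nlinarith [norm_nonneg (y - x)])
    (left_mem_segment ℝ x y) (right_mem_segment ℝ x y)
  calc _ = ‖f y - fderiv ℂ f x y - (f x - fderiv ℂ f x x)‖ := by
        rw [map_sub]; congr 1; abel
    _ ≤ _ := key
    _ = _ := by ring

end FlatTools


section ArtinOne

section Gen
variable {X : Type*} [NormedAddCommGroup X] [NormedSpace ℂ X] [FiniteDimensional ℂ X]

lemma aux_comp_diff {f : X → ℂ} {ρ : ℝ} (hρ : 0 < ρ) (hf : DifferentiableOn ℂ f (ball 0 ρ))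
    {a b : ℝ → X} (ha : Tendsto a RL (𝓝 0)) (hb : Tendsto b RL (𝓝 0)) {q : ℕ}
    (hab : (fun s => a s - b s) =O[RL] fun s : ℝ => s ^ q) :
    (fun s => f (a s) - f (b s)) =O[RL] fun s : ℝ => s ^ q := by
  obtain ⟨K, δ, hδ, hK⟩ := aux_lipschitz hρ hf
  refine Asymptotics.IsBigO.trans (Asymptotics.IsBigO.of_bound K ?_) hab
  filter_upwards [ha (ball_mem_nhds _ hδ), hb (ball_mem_nhds _ hδ)] with s h1 h2
  exact hK _ h2 _ h1

lemma aux_comp_O {f : X → ℂ} {ρ : ℝ} (hρ : 0 < ρ) (hf : DifferentiableOn ℂ f (ball 0 ρ))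
    {a b : ℝ → X} (ha : Tendsto a RL (𝓝 0)) (hb : Tendsto b RL (𝓝 0)) {q : ℕ}
    (hab : (fun s => a s - b s) =O[RL] fun s : ℝ => s ^ q)
    (h : (fun s => f (a s)) =O[RL] fun s : ℝ => s ^ q) :
    (fun s => f (b s)) =O[RL] fun s : ℝ => s ^ q := by
  have := h.sub (aux_comp_diff hρ hf ha hb hab)
  simpa using this

lemma aux_comp_analytic {f : X → ℂ} {ρ : ℝ} (hρ : 0 < ρ) (hf : DifferentiableOn ℂ f (ball 0 ρ))
    {γ : ℂ → X} (hγ : AnalyticAt ℂ γ 0) (h0 : γ 0 = 0) : AnalyticAt ℂ (fun z => f (γ z)) 0 := by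
  rw [Complex.analyticAt_iff_eventually_differentiableAt]
  have h1 : ∀ᶠ z in 𝓝 (0 : ℂ), γ z ∈ ball (0 : X) ρ :=
    hγ.continuousAt.eventually (by rw [h0]; exact ball_mem_nhds _ hρ)
  filter_upwards [h1, hγ.eventually_analyticAt] with z hz hz2
  exact (hf.differentiableAt (isOpen_ball.mem_nhds hz)).comp z hz2.differentiableAt

end Gen

variable {N : ℕ}

lemma aux_pt_tendsto {E : Type*} [NormedAddCommGroup E] {u : ℝ → E} (hu : Tendsto u RL (𝓝 0)) :
    Tendsto (fun s : ℝ => ((s : ℂ), u s)) RL (𝓝 0) := by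
  exact tendsto_ofReal_RL0.prodMk_nhds hu

lemma aux_fderiv_pi {f : ℂ × (Fin N → ℂ) → ℂ} (x : ℂ × (Fin N → ℂ)) (v : Fin N → ℂ) :
    fderiv ℂ f x (0, v) = ∑ j, v j * fderiv ℂ f x (0, Pi.single j 1) := by
  have h1 : ((0 : ℂ), v) = ∑ j, v j • ((0 : ℂ), (Pi.single j 1 : Fin N → ℂ)) := by
    refine Prod.ext ?_ ?_
    · simp [Prod.fst_sum]
    · rw [Prod.snd_sum]
      simp only [Prod.smul_snd]
      exact pi_eq_sum_univ' v
  rw [h1, map_sum]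
  refine Finset.sum_congr rfl fun j _ => ?_
  rw [map_smul, smul_eq_mul]

/-- If a function and its vertical derivatives are flat along a curve, so is its horizontal
derivative. -/
lemma aux_flat_horizontal {f : ℂ × (Fin N → ℂ) → ℂ} {ρ : ℝ} (hρ : 0 < ρ)
    (hf : DifferentiableOn ℂ f (ball 0 ρ)) {u : ℝ → Fin N → ℂ} (hu : HasExp u)
    (hu0 : Tendsto u RL (𝓝 0)) (hfl : FlatAt fun s : ℝ => f (s, u s))
    (hv : ∀ j, FlatAt fun s : ℝ => fderiv ℂ f (s, u s) (0, Pi.single j 1)) :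
    FlatAt fun s : ℝ => fderiv ℂ f (s, u s) (1, 0) := by
  intro q
  obtain ⟨T, hT, hTu⟩ := hu (q + 1)
  have hT0 := aux_T_zero hu0 hT hTu
  set γ : ℂ → ℂ × (Fin N → ℂ) := fun z => (z, T z) with hγ
  have hγa : AnalyticAt ℂ γ 0 := analyticAt_id.prod hT
  have hγ0 : γ 0 = 0 := by simp [hγ, hT0]
  have ha := aux_pt_tendsto hu0
  have hb : Tendsto (fun s : ℝ => γ s) RL (𝓝 0) := by
    have := hγa.continuousAt.tendsto.comp tendsto_ofReal_RL0
    rwa [hγ0] at this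
  have hab : (fun s : ℝ => ((s : ℂ), u s) - γ s) =O[RL] fun s : ℝ => s ^ (q + 1) := by
    have : (fun s : ℝ => ((s : ℂ), u s) - γ s) = fun s : ℝ => ((0 : ℂ), u s - T s) := by
      funext s; simp [hγ]
    rw [this]
    refine Asymptotics.IsBigO.trans (Asymptotics.IsBigO.of_bound 1 ?_) hTu
    exact Eventually.of_forall fun s => by simp [Prod.norm_def]
  have hab' : (fun s : ℝ => γ s - ((s : ℂ), u s)) =O[RL] fun s : ℝ => s ^ q := by
    have := (hab.trans (pow_isBigO_RL (Nat.le_succ q))).neg_left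
    simpa using this
  -- the function along the approximating curve
  have hVO := aux_comp_O hρ hf ha hb hab (hfl (q + 1))
  have hVa := aux_comp_analytic hρ hf hγa hγ0
  obtain ⟨g, hg, hgV⟩ := aux_real_order hVa hVO
  have hdV : (fun z => deriv (fun z => f (γ z)) z) =O[𝓝 0] fun z : ℂ => z ^ q := by
    refine aux_smul_pow_isBigO (g := fun z => ((q : ℂ) + 1) * g z + z * deriv g z) ?_ ?_
    · exact (analyticAt_const.mul hg).add (analyticAt_id.mul hg.deriv)
    · have h1 : ∀ᶠ z in 𝓝 (0 : ℂ), (fun z => f (γ z)) =ᶠ[𝓝 z] fun z => z ^ (q + 1) • g z :=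
        hgV.eventually_nhds
      filter_upwards [h1, hg.eventually_analyticAt] with z hz hgz
      rw [hz.deriv_eq]
      have := ((hasDerivAt_pow (q + 1) z).smul hgz.differentiableAt.hasDerivAt).deriv
      refine this.trans ?_
      simp only [smul_eq_mul, Nat.add_sub_cancel]
      push_cast
      ring
  have hvert : ∀ j, (fun s : ℝ => fderiv ℂ f (γ s) (0, Pi.single j 1)) =O[RL]
      fun s : ℝ => s ^ q := fun j =>
    (aux_comp_O hρ (aux_dderiv isOpen_ball hf _) ha hb hab (hv j (q + 1))).trans
      (pow_isBigO_RL (Nat.le_succ q))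
  have hsum : (fun s : ℝ => ∑ j, deriv T s j * fderiv ℂ f (γ s) (0, Pi.single j 1)) =O[RL]
      fun s : ℝ => s ^ q := by
    refine Asymptotics.IsBigO.fun_sum fun j _ => ?_
    have h1 : (fun s : ℝ => deriv T s j) =O[RL] fun _ : ℝ => (1 : ℝ) := by
      have h2 : ContinuousAt (fun z => deriv T z j) 0 :=
        (continuous_apply j).continuousAt.comp hT.deriv.continuousAt
      exact (h2.isBigO_one ℝ).comp_tendsto tendsto_ofReal_RL0
    simpa using h1.mul (hvert j)
  have hmain : (fun s : ℝ => fderiv ℂ f (γ s) (1, 0)) =O[RL] fun s : ℝ => s ^ q := by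
    refine ((aux_to_real hdV).sub hsum).congr' ?_ EventuallyEq.rfl
    have h1 : ∀ᶠ z in 𝓝 (0 : ℂ), γ z ∈ ball (0 : ℂ × (Fin N → ℂ)) ρ :=
      hγa.continuousAt.eventually (by rw [hγ0]; exact ball_mem_nhds _ hρ)
    filter_upwards [tendsto_ofReal_RL0.eventually (h1.and hT.eventually_analyticAt)] with s hs
    have h2 : HasDerivAt γ (1, deriv T s) (s : ℂ) :=
      (hasDerivAt_id _).prodMk hs.2.differentiableAt.hasDerivAt
    have h3 := (hf.differentiableAt (isOpen_ball.mem_nhds hs.1)).hasFDerivAt.comp_hasDerivAt _ h2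
    have h4 : deriv (fun z => f (γ z)) (s : ℂ) = fderiv ℂ f (γ s) (1, deriv T s) := h3.deriv
    rw [h4, ← aux_fderiv_pi, ← map_sub]
    simp
  exact aux_comp_O hρ (aux_dderiv isOpen_ball hf _) hb ha hab' hmain

/-- Either a flat function vanishes, or there is a flat function with a non flat vertical
derivative. -/
lemma aux_nonflat {ρ : ℝ} (hρ : 0 < ρ) {u : ℝ → Fin N → ℂ} (hu : HasExp u)
    (hu0 : Tendsto u RL (𝓝 0))
    (hall : ∀ f : ℂ × (Fin N → ℂ) → ℂ, DifferentiableOn ℂ f (ball 0 ρ) →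
      (FlatAt fun s : ℝ => f (s, u s)) →
      ∀ j, FlatAt fun s : ℝ => fderiv ℂ f (s, u s) (0, Pi.single j 1))
    (f : ℂ × (Fin N → ℂ) → ℂ) (hf : DifferentiableOn ℂ f (ball 0 ρ))
    (hfl : FlatAt fun s : ℝ => f (s, u s)) : ∀ v ∈ ball (0 : ℂ × (Fin N → ℂ)) ρ, f v = 0 := by
  intro v hv
  have hdir : ∀ f : ℂ × (Fin N → ℂ) → ℂ, DifferentiableOn ℂ f (ball 0 ρ) →
      (FlatAt fun s : ℝ => f (s, u s)) → FlatAt fun s : ℝ => fderiv ℂ f (s, u s) v := by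
    intro f hf hfl q
    have h1 := aux_flat_horizontal hρ hf hu hu0 hfl (hall f hf hfl) q
    have h2 : (fun s : ℝ => ∑ j, v.2 j * fderiv ℂ f (s, u s) (0, Pi.single j 1)) =O[RL]
        fun s : ℝ => s ^ q :=
      Asymptotics.IsBigO.fun_sum fun j _ => (hall f hf hfl j q).const_mul_left _
    refine ((h1.const_mul_left v.1).add h2).congr_left fun s => ?_
    rw [← aux_fderiv_pi, ← smul_eq_mul, ← map_smul, ← map_add]
    simp
  have hval : ∀ f : ℂ × (Fin N → ℂ) → ℂ, DifferentiableOn ℂ f (ball 0 ρ) →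
      (FlatAt fun s : ℝ => f (s, u s)) → f 0 = 0 := by
    intro f hf hfl
    have h1 : ContinuousAt f 0 :=
      (hf.differentiableAt (ball_mem_nhds _ hρ)).continuousAt
    exact tendsto_nhds_unique (h1.tendsto.comp (aux_pt_tendsto hu0)) hfl.tendsto
  have hit : ∀ k : ℕ, ∀ f : ℂ × (Fin N → ℂ) → ℂ, DifferentiableOn ℂ f (ball 0 ρ) →
      (FlatAt fun s : ℝ => f (s, u s)) → iteratedDeriv k (fun z : ℂ => f (z • v)) 0 = 0 := by
    intro k
    induction k with
    | zero => intro f hf hfl; simpa using hval f hf hfl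
    | succ k ih =>
      intro f hf hfl
      rw [iteratedDeriv_succ']
      refine Eq.trans ?_ (ih _ (aux_dderiv isOpen_ball hf v) (hdir f hf hfl))
      refine Filter.EventuallyEq.iteratedDeriv_eq k ?_
      have h1 : ContinuousAt (fun z : ℂ => z • v) 0 := by fun_prop
      have h2 : ∀ᶠ z in 𝓝 (0 : ℂ), z • v ∈ ball (0 : ℂ × (Fin N → ℂ)) ρ :=
        h1.eventually (by simp only [zero_smul]; exact ball_mem_nhds _ hρ)
      filter_upwards [h2] with z hz
      have h3 : HasDerivAt (fun z : ℂ => z • v) v z := by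
        simpa using (hasDerivAt_id z).smul_const v
      exact ((hf.differentiableAt (isOpen_ball.mem_nhds hz)).hasFDerivAt.comp_hasDerivAt z h3).deriv
  by_cases hv0 : v = 0
  · rw [hv0]; exact hval f hf hfl
  have hvn : 0 < ‖v‖ := norm_pos_iff.mpr hv0
  rw [mem_ball_zero_iff] at hv
  have hd : DifferentiableOn ℂ (fun z : ℂ => f (z • v)) (ball 0 (ρ / ‖v‖)) := by
    refine hf.comp (by fun_prop) ?_
    intro z hz
    rw [mem_ball_zero_iff, lt_div_iff₀ hvn] at hz
    simpa [norm_smul] using hz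
  have h1 : (1 : ℂ) ∈ ball (0 : ℂ) (ρ / ‖v‖) := by
    rw [mem_ball_zero_iff, lt_div_iff₀ hvn]; simpa using hv
  have h2 := Complex.hasSum_taylorSeries_on_ball hd h1
  have h3 : ∀ k : ℕ, iteratedDeriv k (fun z : ℂ => f (z • v)) 0 = 0 := fun k => hit k f hf hfl
  simp only [h3, smul_zero] at h2
  simpa using (h2.unique hasSum_zero)

end ArtinOne


section ArtinReduce

variable {N : ℕ}

lemma aux_blowup {f : ℂ × (Fin N → ℂ) → ℂ} {ρ : ℝ} (hρ : 0 < ρ)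
    (hf : DifferentiableOn ℂ f (ball 0 ρ)) {u : ℝ → Fin N → ℂ} (hu : HasExp u)
    (hu0 : Tendsto u RL (𝓝 0)) (hfl : FlatAt fun s : ℝ => f (s, u s)) {p : ℕ}
    (hp : ∀ l, (fun s : ℝ => fderiv ℂ f (s, u s) (0, Pi.single l 1)) =O[RL] fun s : ℝ => s ^ p)
    {j : Fin N}
    (hj : ¬ (fun s : ℝ => fderiv ℂ f (s, u s) (0, Pi.single j 1)) =O[RL]
      fun s : ℝ => s ^ (p + 1)) :
    ∃ (T : ℂ → Fin N → ℂ) (R : ℝ) (Q : ℂ × (Fin N → ℂ) → ℂ), AnalyticAt ℂ T 0 ∧ T 0 = 0 ∧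
      ((fun s : ℝ => u s - T s) =O[RL] fun s : ℝ => s ^ (p + 2)) ∧ 0 < R ∧
      DifferentiableOn ℂ Q (ball 0 R) ∧ Q 0 = 0 ∧ fderiv ℂ Q 0 (0, Pi.single j 1) ≠ 0 ∧
      ∀ x ∈ ball (0 : ℂ × (Fin N → ℂ)) R,
        f (x.1, T x.1 + x.1 ^ (p + 1) • x.2) = x.1 ^ (2 * p + 1) * Q x := by
  obtain ⟨T, hT, hTu⟩ := hu (p + 2)
  have hT0 := aux_T_zero hu0 hT hTu
  -- the approximating curve
  set γ : ℂ → ℂ × (Fin N → ℂ) := fun z => (z, T z) with hγ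
  have hγa : AnalyticAt ℂ γ 0 := analyticAt_id.prod hT
  have hγ0 : γ 0 = 0 := by simp [hγ, hT0]
  have ha := aux_pt_tendsto hu0
  have hb : Tendsto (fun s : ℝ => γ s) RL (𝓝 0) := by
    have := hγa.continuousAt.tendsto.comp tendsto_ofReal_RL0
    rwa [hγ0] at this
  have habeq : ∀ s : ℝ, ((s : ℂ), u s) - γ s = ((0 : ℂ), u s - T s) := by
    intro s; simp [hγ]
  have hab : (fun s : ℝ => ((s : ℂ), u s) - γ s) =O[RL] fun s : ℝ => s ^ (p + 2) := by
    simp only [habeq]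
    refine Asymptotics.IsBigO.trans (Asymptotics.IsBigO.of_bound 1 ?_) hTu
    exact Eventually.of_forall fun s => by simp [Prod.norm_def]
  -- vertical derivatives along the approximating curve
  have hD : ∀ l, (fun s : ℝ => fderiv ℂ f (γ s) (0, Pi.single l 1)) =O[RL] fun s : ℝ => s ^ p :=
    fun l => aux_comp_O hρ (aux_dderiv isOpen_ball hf _) ha hb
      (hab.trans (pow_isBigO_RL (by omega))) (hp l)
  have hDa : ∀ l, AnalyticAt ℂ (fun z => fderiv ℂ f (γ z) (0, Pi.single l 1)) 0 := fun l =>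
    aux_comp_analytic hρ (aux_dderiv isOpen_ball hf _) hγa hγ0
  choose b hba hbD using fun l => aux_real_order (hDa l) (hD l)
  have hbj : b j 0 ≠ 0 := by
    intro h0
    apply hj
    have h1 : (fun z => b j z) =O[𝓝 0] fun z : ℂ => z := by
      have := (hba j).differentiableAt.isBigO_sub
      simpa [h0] using this
    have h2 : (fun z => fderiv ℂ f (γ z) (0, Pi.single j 1)) =O[𝓝 0] fun z : ℂ => z ^ (p + 1) := by
      have := (Asymptotics.isBigO_refl (fun z : ℂ => z ^ p) (𝓝 0)).smul h1
      refine this.congr' ((hbD j).mono fun z hz => hz.symm) ?_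
      exact Eventually.of_forall fun z => by simp [pow_succ]
    have hba' : (fun s : ℝ => γ s - ((s : ℂ), u s)) =O[RL] fun s : ℝ => s ^ (p + 1) := by
      have := (hab.trans (pow_isBigO_RL (show p + 1 ≤ p + 2 by omega))).neg_left
      simpa using this
    exact aux_comp_O hρ (aux_dderiv isOpen_ball hf _) hb ha hba' (aux_to_real h2)
  obtain ⟨K, δ, hδ, hK⟩ := aux_taylor2 hρ hf
  -- Taylor estimate along curves
  have htay : ∀ c : ℝ → ℂ × (Fin N → ℂ), Tendsto c RL (𝓝 0) →
      ((fun s : ℝ => c s - γ s) =O[RL] fun s : ℝ => s ^ (p + 1)) →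
      (fun s : ℝ => f (c s) - f (γ s) - fderiv ℂ f (γ s) (c s - γ s)) =O[RL]
        fun s : ℝ => s ^ (2 * p + 2) := by
    intro c hc hcO
    have h1 : (fun s : ℝ => f (c s) - f (γ s) - fderiv ℂ f (γ s) (c s - γ s)) =O[RL]
        fun s : ℝ => ‖c s - γ s‖ ^ 2 := by
      refine Asymptotics.IsBigO.of_bound K ?_
      filter_upwards [hc (ball_mem_nhds _ hδ), hb (ball_mem_nhds _ hδ)] with s h1 h2
      simpa using hK _ h2 _ h1
    refine h1.trans ?_
    have h2 := (hcO.norm_left).pow 2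
    refine h2.congr_right fun s => ?_
    rw [← pow_mul]; congr 1; ring
  have hTf : (fun s : ℝ => f (γ s)) =O[RL] fun s : ℝ => s ^ (2 * p + 2) := by
    have h1 := htay _ ha (hab.trans (pow_isBigO_RL (by omega)))
    have h2 : (fun s : ℝ => fderiv ℂ f (γ s) (((s : ℂ), u s) - γ s)) =O[RL]
        fun s : ℝ => s ^ (2 * p + 2) := by
      have hh : (fun s : ℝ => fderiv ℂ f (γ s) (((s : ℂ), u s) - γ s)) = fun s : ℝ =>
          ∑ l, (u s - T s) l * fderiv ℂ f (γ s) (0, Pi.single l 1) := by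
        funext s; rw [habeq, aux_fderiv_pi]
      rw [hh]
      refine Asymptotics.IsBigO.fun_sum fun l _ => ?_
      have h3 : (fun s : ℝ => (u s - T s) l) =O[RL] fun s : ℝ => s ^ (p + 2) := by
        refine Asymptotics.IsBigO.trans (Asymptotics.IsBigO.of_bound 1 ?_) hTu
        exact Eventually.of_forall fun s => by rw [one_mul]; exact norm_le_pi_norm _ l
      have h4 := h3.mul (hD l)
      refine h4.congr_right fun s => ?_
      rw [← pow_add]; congr 1; ring
    have h3 := ((hfl (2 * p + 2)).sub h1).sub h2
    refine h3.congr_left fun s => ?_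
    ring
  have hγy : ∀ y : Fin N → ℂ, AnalyticAt ℂ
      (fun z : ℂ => ((z, T z + z ^ (p + 1) • y) : ℂ × (Fin N → ℂ))) 0 := by
    intro y
    refine analyticAt_id.prod (hT.add ?_)
    exact (analyticAt_id.pow _).smul analyticAt_const
  have hγy0 : ∀ y : Fin N → ℂ, (((0 : ℂ), T 0 + (0 : ℂ) ^ (p + 1) • y) : ℂ × (Fin N → ℂ)) = 0 := by
    intro y; simp [hT0]
  have hmain : ∀ y : Fin N → ℂ, (fun s : ℝ => f ((s : ℂ), T s + (s : ℂ) ^ (p + 1) • y) -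
      (s : ℂ) ^ (2 * p + 1) * ∑ l, y l * b l s) =O[RL] fun s : ℝ => s ^ (2 * p + 2) := by
    intro y
    have hc : Tendsto (fun s : ℝ => (((s : ℂ), T s + (s : ℂ) ^ (p + 1) • y) : ℂ × (Fin N → ℂ)))
        RL (𝓝 0) := by
      have := (hγy y).continuousAt.tendsto.comp tendsto_ofReal_RL0
      rwa [hγy0] at this
    have hceq : ∀ s : ℝ, (((s : ℂ), T s + (s : ℂ) ^ (p + 1) • y) : ℂ × (Fin N → ℂ)) - γ s =
        (0, (s : ℂ) ^ (p + 1) • y) := by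
      intro s; simp [hγ]
    have h1 := htay _ hc (by
      simp only [hceq]
      refine Asymptotics.IsBigO.of_bound ‖y‖ (Eventually.of_forall fun s => ?_)
      simp [Prod.norm_def, norm_smul, mul_comm]
      positivity)
    refine ((h1.add hTf).congr' ?_ EventuallyEq.rfl)
    have h2 : ∀ᶠ z in 𝓝 (0 : ℂ), ∀ l, fderiv ℂ f (γ z) (0, Pi.single l 1) = z ^ p • b l z :=
      eventually_all.mpr hbD
    filter_upwards [tendsto_ofReal_RL0.eventually h2] with s hs
    rw [hceq, aux_fderiv_pi]
    simp only [hs, Pi.smul_apply, smul_eq_mul]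
    have : ∀ l, (s : ℂ) ^ (p + 1) * y l * ((s : ℂ) ^ p * b l s) =
        (s : ℂ) ^ (2 * p + 1) * (y l * b l s) := by
      intro l; ring
    simp only [this, ← Finset.mul_sum]
    ring
  -- the blown up function
  set κ : ℂ × (Fin N → ℂ) → ℂ × (Fin N → ℂ) := fun x => (x.1, T x.1 + x.1 ^ (p + 1) • x.2) with hκ
  have hTd : ∀ᶠ x in 𝓝 (0 : ℂ × (Fin N → ℂ)), DifferentiableAt ℂ T x.1 := by
    have h1 : Tendsto (fun x : ℂ × (Fin N → ℂ) => x.1) (𝓝 0) (𝓝 0) := continuous_fst.tendsto' _ _ rfl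
    exact h1.eventually (hT.eventually_analyticAt.mono fun z hz => hz.differentiableAt)
  have hκd : ∀ x : ℂ × (Fin N → ℂ), DifferentiableAt ℂ T x.1 → DifferentiableAt ℂ κ x := by
    intro x hx
    refine differentiableAt_fst.prodMk (DifferentiableAt.add ?_ ?_)
    · exact hx.comp x differentiableAt_fst
    · fun_prop
  have hκ0 : κ 0 = 0 := by simp [hκ, hT0]
  have hκn : ∀ᶠ x in 𝓝 (0 : ℂ × (Fin N → ℂ)), κ x ∈ ball (0 : ℂ × (Fin N → ℂ)) ρ :=
    (hκd 0 hT.differentiableAt).continuousAt.eventually (by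
      rw [hκ0]; exact ball_mem_nhds _ hρ)
  obtain ⟨R, hR, hRs⟩ := Metric.eventually_nhds_iff_ball.mp (hTd.and hκn)
  have hFd : DifferentiableOn ℂ (fun x => f (κ x)) (ball 0 R) := fun x hx =>
    ((hf.differentiableAt (isOpen_ball.mem_nhds (hRs x hx).2)).comp x
      (hκd x (hRs x hx).1)).differentiableWithinAt
  obtain ⟨Q, hQ, hFQ⟩ := aux_div hR hFd (2 * p + 1) (by
    intro y _
    have h1 : (fun s : ℝ => f (κ ((s : ℂ), y))) =O[RL] fun s : ℝ => s ^ (2 * p + 1) := by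
      have h2 : (fun s : ℝ => (s : ℂ) ^ (2 * p + 1) * ∑ l, y l * b l s) =O[RL]
          fun s : ℝ => s ^ (2 * p + 1) := by
        have h3 : (fun s : ℝ => ∑ l, y l * b l s) =O[RL] fun _ => (1 : ℝ) := by
          refine Asymptotics.IsBigO.fun_sum fun l _ => Asymptotics.IsBigO.const_mul_left ?_ _
          exact ((hba l).continuousAt.isBigO_one ℝ).comp_tendsto tendsto_ofReal_RL0
        simpa using (ofReal_pow_isBigO (2 * p + 1)).mul h3
      refine (((hmain y).trans (pow_isBigO_RL (show 2 * p + 1 ≤ 2 * p + 2 by omega))).add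
        h2).congr_left fun s => ?_
      simp [hκ]
    obtain ⟨g, hg, hgV⟩ := aux_real_order (aux_comp_analytic hρ hf (hγy y) (hγy0 y)) h1
    exact (aux_smul_pow_isBigO hg hgV).mono nhdsWithin_le_nhds)
  have hR2 : 0 < R / 2 := by positivity
  have hQ0 : ∀ y ∈ ball (0 : Fin N → ℂ) (R / 2), Q (0, y) = ∑ l, y l * b l 0 := by
    intro y hy
    have hy0 : ((0 : ℂ), y) ∈ ball (0 : ℂ × (Fin N → ℂ)) (R / 2) := by
      simpa [Prod.norm_def] using hy
    have h1 : ContinuousAt (fun z : ℂ => Q (z, y) - ∑ l, y l * b l z) 0 := by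
      refine ContinuousAt.sub ?_ ?_
      · have h2 : ContinuousAt Q ((fun z : ℂ => (z, y)) 0) :=
          (hQ.differentiableAt (isOpen_ball.mem_nhds hy0)).continuousAt
        exact h2.comp (f := fun z : ℂ => (z, y)) (by fun_prop)
      · exact tendsto_finsetSum _ fun l _ =>
          (continuousAt_const.mul (hba l).continuousAt)
    have h2 : Tendsto (fun s : ℝ => Q ((s : ℂ), y) - ∑ l, y l * b l s) RL (𝓝 0) := by
      have h3 : (fun s : ℝ => ((s : ℂ) ^ (2 * p + 1))⁻¹ •
          (f ((s : ℂ), T s + (s : ℂ) ^ (p + 1) • y) -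
          (s : ℂ) ^ (2 * p + 1) * ∑ l, y l * b l s)) =O[RL] fun s : ℝ => s ^ (0 + 1) :=
        aux_div_pow ((hmain y).congr_right fun s => by congr 1; ring)
      refine (h3.trans_tendsto (pow_tendsto_RL 0)).congr' ?_
      have h4 : Tendsto (fun s : ℝ => ((s : ℂ), y)) RL (𝓝 (0, y)) :=
        tendsto_ofReal_RL0.prodMk_nhds tendsto_const_nhds
      filter_upwards [self_mem_nhdsWithin, h4 (isOpen_ball.mem_nhds hy0)] with s hs hs2
      have hs0 : (s : ℂ) ≠ 0 := by simpa using hs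
      have h5 := hFQ _ hs2
      simp only [hκ] at h5
      rw [h5, ← mul_sub, smul_eq_mul, ← mul_assoc, inv_mul_cancel₀ (pow_ne_zero _ hs0), one_mul]
    have h3 := tendsto_nhds_unique (h1.tendsto.comp tendsto_ofReal_RL0) h2
    exact sub_eq_zero.mp h3
  refine ⟨T, R / 2, Q, hT, hT0, hTu, hR2, hQ, ?_, ?_, fun x hx => hFQ x hx⟩
  · have := hQ0 0 (mem_ball_self hR2)
    refine Eq.trans this ?_
    simp
  · have h1 : HasDerivAt (fun τ : ℂ => Q (τ • ((0 : ℂ), Pi.single j 1)))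
        (fderiv ℂ Q 0 (0, Pi.single j 1)) 0 := by
      have h2 : HasFDerivAt Q (fderiv ℂ Q 0) ((0 : ℂ) • ((0 : ℂ), (Pi.single j 1 : Fin N → ℂ))) := by
        rw [zero_smul]; exact (hQ.differentiableAt (ball_mem_nhds _ hR2)).hasFDerivAt
      have h3 : HasDerivAt (fun τ : ℂ => τ • ((0 : ℂ), (Pi.single j 1 : Fin N → ℂ)))
          ((0 : ℂ), (Pi.single j 1 : Fin N → ℂ)) 0 := by
        simpa using (hasDerivAt_id (0 : ℂ)).smul_const ((0 : ℂ), (Pi.single j 1 : Fin N → ℂ))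
      exact h2.comp_hasDerivAt (0 : ℂ) h3
    have h2 : HasDerivAt (fun τ : ℂ => τ * b j 0) (b j 0) 0 := by
      simpa using (hasDerivAt_id (0 : ℂ)).mul_const (b j 0)
    have h3 : (fun τ : ℂ => τ * b j 0) =ᶠ[𝓝 0]
        fun τ : ℂ => Q (τ • ((0 : ℂ), Pi.single j 1)) := by
      have h4 : Tendsto (fun τ : ℂ => τ • (Pi.single j 1 : Fin N → ℂ)) (𝓝 0) (𝓝 0) := by
        have : Continuous (fun τ : ℂ => τ • (Pi.single j 1 : Fin N → ℂ)) := by fun_prop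
        exact this.tendsto' _ _ (by simp)
      filter_upwards [h4 (ball_mem_nhds _ hR2)] with τ hτ
      have := hQ0 _ hτ
      rw [Prod.smul_mk, smul_zero, this]
      simp [Pi.single_apply]
    rw [(h1.congr_of_eventuallyEq h3).unique h2]
    exact hbj

end ArtinReduce


section ArtinMain

variable {N : ℕ}

lemma aux_reduce {f : ℂ × (Fin (N + 1) → ℂ) → ℂ} {ρ : ℝ} (hρ : 0 < ρ)
    (hf : DifferentiableOn ℂ f (ball 0 ρ)) {u : ℝ → Fin (N + 1) → ℂ} (hu : HasExp u)
    (hu0 : Tendsto u RL (𝓝 0)) (hfl : FlatAt fun s : ℝ => f (s, u s)) {p : ℕ}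
    (hp : ∀ l, (fun s : ℝ => fderiv ℂ f (s, u s) (0, Pi.single l 1)) =O[RL] fun s : ℝ => s ^ p)
    {j : Fin (N + 1)}
    (hj : ¬ (fun s : ℝ => fderiv ℂ f (s, u s) (0, Pi.single j 1)) =O[RL]
      fun s : ℝ => s ^ (p + 1)) :
    ∃ (k : ℂ × (Fin N → ℂ) → Fin (N + 1) → ℂ) (û : ℝ → Fin N → ℂ),
      (∀ᶠ x in 𝓝 0, DifferentiableAt ℂ k x) ∧ k 0 = 0 ∧ HasExp û ∧ Tendsto û RL (𝓝 0) ∧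
      FlatAt fun s : ℝ => k (s, û s) - u s := by
  obtain ⟨T, R, Q, hT, hT0, hTu, hR, hQ, hQ0, hQj, hfQ⟩ := aux_blowup hρ hf hu hu0 hfl hp hj
  -- the blown up curve
  set y : ℝ → Fin (N + 1) → ℂ := fun s => ((s : ℂ) ^ (p + 1))⁻¹ • (u s - T s) with hy
  have hyO : y =O[RL] fun s : ℝ => s ^ 1 := aux_div_pow (hTu.congr_right fun s => by congr 1; ring)
  have hy0 : Tendsto y RL (𝓝 0) := hyO.trans_tendsto (pow_tendsto_RL 0)
  have hyE : HasExp y := by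
    intro q
    obtain ⟨S, hS, hSu⟩ := hu (q + (p + 1))
    have hST : (fun s : ℝ => S s - T s) =O[RL] fun s : ℝ => s ^ (p + 1) := by
      have := (hTu.trans (pow_isBigO_RL (show p + 1 ≤ p + 2 by omega))).sub
        (hSu.trans (pow_isBigO_RL (show p + 1 ≤ q + (p + 1) by omega)))
      simpa using this
    obtain ⟨g, hg, hgS⟩ := aux_real_order (hS.sub hT) hST
    refine ⟨g, hg, ?_⟩
    refine (aux_div_pow hSu).congr' ?_ EventuallyEq.rfl
    filter_upwards [self_mem_nhdsWithin, tendsto_ofReal_RL0.eventually hgS] with s hs hs2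
    have hs0 : (s : ℂ) ≠ 0 := by simpa using hs
    have h1 : g s = ((s : ℂ) ^ (p + 1))⁻¹ • (S s - T s) := by
      rw [Pi.sub_apply] at hs2
      rw [hs2, smul_smul, inv_mul_cancel₀ (pow_ne_zero _ hs0), one_smul]
    rw [h1, hy, ← smul_sub]
    congr 1
    abel
  have hyu : ∀ᶠ s : ℝ in RL, u s = T s + (s : ℂ) ^ (p + 1) • y s := by
    filter_upwards [self_mem_nhdsWithin] with s hs
    have hs0 : (s : ℂ) ≠ 0 := by simpa using hs
    rw [hy, smul_smul, mul_inv_cancel₀ (pow_ne_zero _ hs0), one_smul]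
    abel
  have hQfl : FlatAt fun s : ℝ => Q (s, y s) := by
    intro q
    refine (hfl.div_pow (2 * p + 1) q).congr' ?_ EventuallyEq.rfl
    filter_upwards [self_mem_nhdsWithin, hyu,
      (aux_pt_tendsto hy0) (ball_mem_nhds _ hR)] with s hs hs1 hs2
    have hs0 : (s : ℂ) ≠ 0 := by simpa using hs
    have h1 := hfQ _ hs2
    simp only [← hs1] at h1
    rw [h1, smul_eq_mul, ← mul_assoc, inv_mul_cancel₀ (pow_ne_zero _ hs0), one_mul]
  -- the implicit function
  let ins : (ℂ × (Fin N → ℂ)) × ℂ →L[ℂ] ℂ × (Fin (N + 1) → ℂ) :=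
    LinearMap.toContinuousLinearMap
      { toFun := fun v => (v.1.1, Fin.insertNth j v.2 v.1.2)
        map_add' := by
          intro v w
          refine Prod.ext rfl ?_
          funext i
          refine Fin.succAboveCases j ?_ (fun i => ?_) i <;> simp
        map_smul' := by
          intro c v
          refine Prod.ext rfl ?_
          funext i
          refine Fin.succAboveCases j ?_ (fun i => ?_) i <;> simp }
  have hins : ∀ v, ins v = (v.1.1, Fin.insertNth j v.2 v.1.2) := fun v => rfl
  have hQc : ContDiffAt ℂ 1 Q (ins 0) := by
    rw [map_zero]
    exact_mod_cast aux_contDiffAt isOpen_ball hQ 1 (mem_ball_self hR)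
  have cdf : ContDiffAt ℂ 1 (fun v => Q (ins v)) 0 := hQc.comp 0 ins.contDiff.contDiffAt
  have hfd : ∀ v, fderiv ℂ (fun v => Q (ins v)) 0 v = fderiv ℂ Q 0 (ins v) := by
    intro v
    have h1 : HasFDerivAt Q (fderiv ℂ Q 0) (ins 0) := by
      rw [map_zero]; exact (hQ.differentiableAt (ball_mem_nhds _ hR)).hasFDerivAt
    have h2 := (h1.comp (0 : (ℂ × (Fin N → ℂ)) × ℂ) ins.hasFDerivAt).fderiv
    have h3 : fderiv ℂ (fun v => Q (ins v)) 0 = (fderiv ℂ Q 0).comp ins := h2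
    rw [h3]; rfl
  have hins1 : ∀ c : ℂ, ins (0, c) = c • ((0 : ℂ), (Pi.single j 1 : Fin (N + 1) → ℂ)) := by
    intro c
    rw [hins]
    refine Prod.ext (by simp) ?_
    funext i
    refine Fin.succAboveCases j ?_ (fun i => ?_) i <;> simp
  set c₀ := fderiv ℂ Q 0 (0, Pi.single j 1) with hc₀
  have if₂ : (fderiv ℂ (fun v => Q (ins v)) 0 ∘L .inr ℂ (ℂ × (Fin N → ℂ)) ℂ).IsInvertible := by
    refine ⟨ContinuousLinearEquiv.unitsEquivAut ℂ (Units.mk0 c₀ hQj), ?_⟩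
    ext
    simp only [ContinuousLinearMap.comp_apply, ContinuousLinearMap.inr_apply, hfd, hins1, map_smul]
    simp [hc₀]
  set g := cdf.implicitFunction one_ne_zero if₂ with hg
  have hg0 : g 0 = 0 := cdf.implicitFunction_apply_self one_ne_zero if₂
  have hgQ : ∀ᶠ x in 𝓝 (0 : ℂ × (Fin N → ℂ)), Q (ins (x, g x)) = 0 := by
    have := cdf.eventually_apply_implicitFunction one_ne_zero if₂
    simpa [hQ0] using this
  have hgc : ContDiffAt ℂ 1 g 0 := cdf.contDiffAt_implicitFunction one_ne_zero if₂
  have hgd : ∀ᶠ x in 𝓝 (0 : ℂ × (Fin N → ℂ)), DifferentiableAt ℂ g x :=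
    (hgc.eventually (by simp)).mono fun x hx => hx.differentiableAt one_ne_zero
  set û : ℝ → Fin N → ℂ := fun s i => y s (j.succAbove i) with hû
  have hû0 : Tendsto û RL (𝓝 0) := by
    rw [tendsto_pi_nhds] at hy0 ⊢
    intro i
    exact hy0 (j.succAbove i)
  refine ⟨fun x => T x.1 + x.1 ^ (p + 1) • (ins (x, g x)).2, û, ?_, ?_, ?_, hû0, ?_⟩
  · have h1 : Tendsto (fun x : ℂ × (Fin N → ℂ) => x.1) (𝓝 0) (𝓝 0) :=
      continuous_fst.tendsto' _ _ rfl
    filter_upwards [hgd, h1.eventually hT.eventually_analyticAt] with x hx hx2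
    refine DifferentiableAt.add (hx2.differentiableAt.comp x differentiableAt_fst) ?_
    have hpw : DifferentiableAt ℂ (fun x : ℂ × (Fin N → ℂ) => x.1 ^ (p + 1)) x := by fun_prop
    refine hpw.smul ?_
    exact (ins.differentiableAt.comp x (differentiableAt_id.prodMk hx)).snd
  · simp [hT0]
  · intro q
    obtain ⟨S, hS, hSy⟩ := hyE q
    refine ⟨fun z i => S z (j.succAbove i), ?_, ?_⟩
    · rw [analyticAt_pi_iff] at hS ⊢
      exact fun i => hS _
    · refine Asymptotics.IsBigO.trans (Asymptotics.IsBigO.of_bound 1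
        (Eventually.of_forall fun s => ?_)) hSy
      rw [one_mul]
      refine (pi_norm_le_iff_of_nonneg (norm_nonneg _)).mpr fun i => ?_
      exact norm_le_pi_norm (y s - S s) (j.succAbove i)
  · -- comparison with the original curve
    have hyins : ∀ s, ins ((((s : ℝ) : ℂ), û s), y s j) = ((s : ℂ), y s) := by
      intro s
      rw [hins]
      refine Prod.ext rfl ?_
      funext i
      refine Fin.succAboveCases j ?_ (fun i => ?_) i <;> simp [hû]
    have hst : HasStrictFDerivAt (fun v => Q (ins v)) (fderiv ℂ (fun v => Q (ins v)) 0) 0 :=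
      cdf.hasStrictFDerivAt one_ne_zero
    have hx0 := aux_pt_tendsto hû0
    have hgx : Tendsto (fun s : ℝ => g ((s : ℂ), û s)) RL (𝓝 0) := by
      have := hgc.continuousAt.tendsto.comp hx0
      rwa [hg0] at this
    have hyj : Tendsto (fun s : ℝ => y s j) RL (𝓝 0) := (tendsto_pi_nhds.mp hy0) j
    have hA : Tendsto (fun s : ℝ => ((((s : ℂ), û s), g ((s : ℂ), û s)), (((s : ℂ), û s), y s j)))
        RL (𝓝 ((0 : (ℂ × (Fin N → ℂ)) × ℂ), (0 : (ℂ × (Fin N → ℂ)) × ℂ))) :=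
      (hx0.prodMk_nhds hgx).prodMk_nhds (hx0.prodMk_nhds hyj)
    have hlit := (hst.isLittleO.comp_tendsto hA)
    have hd : FlatAt fun s : ℝ => g ((s : ℂ), û s) - y s j := by
      intro q
      have h1 : (fun s : ℝ => -Q ((s : ℂ), y s) - c₀ * (g ((s : ℂ), û s) - y s j)) =o[RL]
          fun s : ℝ => g ((s : ℂ), û s) - y s j := by
        refine (hlit.trans_isBigO (Asymptotics.IsBigO.of_bound 1
          (Eventually.of_forall fun s => ?_))).congr' ?_ EventuallyEq.rfl
        · simp [Prod.norm_def]
        · filter_upwards [hx0.eventually hgQ] with s hs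
          simp only [Function.comp_apply, hs, hyins, hfd]
          have : ((((s : ℂ), û s), g ((s : ℂ), û s)) - (((s : ℂ), û s), y s j) :
              (ℂ × (Fin N → ℂ)) × ℂ) = (0, g ((s : ℂ), û s) - y s j) := by simp
          rw [this, hins1, map_smul, ← hc₀, smul_eq_mul]
          ring
      have h2 : (fun s : ℝ => g ((s : ℂ), û s) - y s j) =O[RL] fun s : ℝ => -Q ((s : ℂ), y s) := by
        have h3 : (fun s : ℝ => -Q ((s : ℂ), y s) - c₀ * (g ((s : ℂ), û s) - y s j)) =o[RL]
            fun s : ℝ => c₀ * (g ((s : ℂ), û s) - y s j) :=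
          (Asymptotics.isLittleO_const_mul_right_iff hQj).mpr h1
        have h4 := h3.right_isBigO_add
        simp only [sub_add_cancel] at h4
        exact (Asymptotics.isBigO_const_mul_left_iff hQj).mp h4
      exact h2.trans (hQfl q).neg_left
    intro q
    have h1 : (fun s : ℝ => (ins ((((s : ℝ) : ℂ), û s), g ((s : ℂ), û s))).2 - y s) =O[RL]
        fun s : ℝ => s ^ q := by
      refine Asymptotics.IsBigO.trans (Asymptotics.IsBigO.of_bound 1
        (Eventually.of_forall fun s => ?_)) (hd q)
      rw [one_mul]
      refine (pi_norm_le_iff_of_nonneg (norm_nonneg _)).mpr fun i => ?_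
      rw [hins]
      refine Fin.succAboveCases j ?_ (fun i => ?_) i <;> simp [hû]
    have h2 : (fun s : ℝ => (s : ℂ) ^ (p + 1) •
        ((ins ((((s : ℝ) : ℂ), û s), g ((s : ℂ), û s))).2 - y s)) =O[RL] fun s : ℝ => s ^ q := by
      have h3 : (fun s : ℝ => (s : ℂ) ^ (p + 1)) =O[RL] fun _ => (1 : ℝ) := by
        have := (ofReal_pow_isBigO (l := RL) (p + 1)).trans (pow_isBigO_RL (Nat.zero_le (p + 1)))
        simpa using this
      simpa using h3.smul h1
    refine h2.congr' ?_ EventuallyEq.rfl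
    filter_upwards [hyu] with s hs
    rw [hs, smul_sub]
    abel

/-- One-dimensional Artin approximation for (possibly infinite) systems of analytic equations. -/
lemma aux_artin {ι : Type*} : ∀ (N : ℕ) (f : ι → ℂ × (Fin N → ℂ) → ℂ) (ρ : ℝ), 0 < ρ →
    (∀ i, DifferentiableOn ℂ (f i) (ball 0 ρ)) → ∀ u : ℝ → Fin N → ℂ, HasExp u →
    Tendsto u RL (𝓝 0) → (∀ i, FlatAt fun s : ℝ => f i (s, u s)) →
    ∀ᶠ ζ in 𝓝 (0 : ℂ), ∃ y : Fin N → ℂ, (ζ, y) ∈ ball (0 : ℂ × (Fin N → ℂ)) ρ ∧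
      ∀ i, f i (ζ, y) = 0 := by
  intro N
  induction N with
  | zero =>
    intro f ρ hρ hf u hu hu0 hfl
    have h0 : ∀ i, ∀ v ∈ ball (0 : ℂ × (Fin 0 → ℂ)) ρ, f i v = 0 := fun i =>
      aux_nonflat hρ hu hu0 (fun _ _ _ j => j.elim0) (f i) (hf i) (hfl i)
    filter_upwards [ball_mem_nhds (0 : ℂ) hρ] with ζ hζ
    have h1 : (ζ, (0 : Fin 0 → ℂ)) ∈ ball (0 : ℂ × (Fin 0 → ℂ)) ρ := by
      rw [mem_ball_zero_iff, Prod.norm_def, norm_zero]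
      simpa [hρ] using hζ
    exact ⟨0, h1, fun i => h0 i _ h1⟩
  | succ N ih =>
    intro f ρ hρ hf u hu hu0 hfl
    by_cases hall : ∀ f : ℂ × (Fin (N + 1) → ℂ) → ℂ, DifferentiableOn ℂ f (ball 0 ρ) →
      (FlatAt fun s : ℝ => f (s, u s)) →
      ∀ j, FlatAt fun s : ℝ => fderiv ℂ f (s, u s) (0, Pi.single j 1)
    · have h0 : ∀ i, ∀ v ∈ ball (0 : ℂ × (Fin (N + 1) → ℂ)) ρ, f i v = 0 := fun i =>
        aux_nonflat hρ hu hu0 hall (f i) (hf i) (hfl i)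
      filter_upwards [ball_mem_nhds (0 : ℂ) hρ] with ζ hζ
      have h1 : (ζ, (0 : Fin (N + 1) → ℂ)) ∈ ball (0 : ℂ × (Fin (N + 1) → ℂ)) ρ := by
        rw [mem_ball_zero_iff, Prod.norm_def, norm_zero]
        simpa [hρ] using hζ
      exact ⟨0, h1, fun i => h0 i _ h1⟩
    · push Not at hall
      obtain ⟨f₀, hf₀, hfl₀, j₀, hj₀⟩ := hall
      have hex : ∃ q : ℕ, ∃ j, ¬ (fun s : ℝ => fderiv ℂ f₀ (s, u s) (0, Pi.single j 1)) =O[RL]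
          fun s : ℝ => s ^ q := by
        simp only [FlatAt, not_forall] at hj₀
        obtain ⟨q, hq⟩ := hj₀
        exact ⟨q, j₀, hq⟩
      classical
      obtain ⟨j, hj⟩ := Nat.find_spec hex
      have hmin : ∀ q < Nat.find hex, ∀ l,
          (fun s : ℝ => fderiv ℂ f₀ (s, u s) (0, Pi.single l 1)) =O[RL] fun s : ℝ => s ^ q := by
        intro q hq l
        have := Nat.find_min hex hq
        push Not at this
        exact this l
      obtain ⟨p, hp⟩ : ∃ p, Nat.find hex = p + 1 := by
        refine Nat.exists_eq_succ_of_ne_zero fun h0 => hj ?_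
        rw [h0]
        have h1 : ContinuousAt (fun x => fderiv ℂ f₀ x (0, Pi.single j 1)) 0 :=
          ((aux_dderiv isOpen_ball hf₀ _).differentiableAt (ball_mem_nhds _ hρ)).continuousAt
        simp only [pow_zero]
        exact (h1.isBigO_one ℝ).comp_tendsto (aux_pt_tendsto hu0)
      rw [hp] at hj hmin
      obtain ⟨k, û, hkd, hk0, hûE, hû0, hku⟩ :=
        aux_reduce hρ hf₀ hu hu0 hfl₀ (hmin p (Nat.lt_succ_self p)) hj
      have hkc : ContinuousAt (fun x : ℂ × (Fin N → ℂ) => (x.1, k x)) 0 :=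
        continuousAt_fst.prodMk hkd.self_of_nhds.continuousAt
      have hkc0 : Tendsto (fun x : ℂ × (Fin N → ℂ) => (x.1, k x)) (𝓝 0) (𝓝 0) := by
        have := hkc.tendsto
        simp only [hk0] at this
        exact this
      obtain ⟨ρ', hρ', hs⟩ := Metric.eventually_nhds_iff_ball.mp
        (hkd.and (hkc0.eventually (ball_mem_nhds _ hρ)))
      have hIH := ih (fun i x => f i (x.1, k x)) ρ' hρ' (fun i x hx =>
        (((hf i).differentiableAt (isOpen_ball.mem_nhds (hs x hx).2)).comp x
          (differentiableAt_fst.prodMk (hs x hx).1)).differentiableWithinAt) û hûE hû0 (by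
          intro i q
          refine aux_comp_O hρ (hf i) (aux_pt_tendsto hu0)
            (hkc0.comp (aux_pt_tendsto hû0)) ?_ (hfl i q)
          refine Asymptotics.IsBigO.trans (Asymptotics.IsBigO.of_bound 1
            (Eventually.of_forall fun s => ?_)) (hku q)
          simp [Prod.norm_def, norm_sub_rev])
      filter_upwards [hIH] with ζ hζ
      obtain ⟨y', hy', hfy⟩ := hζ
      exact ⟨k (ζ, y'), (hs _ hy').2, hfy⟩

end ArtinMain


section Complexify

/-- The inclusion of real vectors in complex vectors. -/
def castV {n : ℕ} (x : Fin n → ℝ) : Fin n → ℂ := fun i => (x i : ℂ)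

lemma continuous_castV {n : ℕ} : Continuous (castV : (Fin n → ℝ) → Fin n → ℂ) :=
  continuous_pi fun i => Complex.continuous_ofReal.comp (continuous_apply i)

lemma norm_castV {n : ℕ} (x : Fin n → ℝ) : ‖castV x‖ = ‖x‖ := by
  simp [castV, Pi.norm_def, nnnorm]

/-- Complexification of a real analytic function. -/
lemma aux_complexify {n : ℕ} {F : (Fin n → ℝ) → ℝ} (hF : AnalyticAt ℝ F 0) :
    ∃ Fc : (Fin n → ℂ) → ℂ, AnalyticAt ℂ Fc 0 ∧
      ∀ᶠ x in 𝓝 (0 : Fin n → ℝ), Fc (castV x) = F x := by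
  obtain ⟨p, r, hp⟩ := hF
  let q : FormalMultilinearSeries ℂ (Fin n → ℂ) ℂ := fun k =>
    ∑ J : Fin k → Fin n, ((p k (fun i => Pi.single (J i) 1) : ℝ) : ℂ) •
      (ContinuousMultilinearMap.mkPiAlgebra ℂ (Fin k) ℂ).compContinuousLinearMap
        (fun i => ContinuousLinearMap.proj (R := ℂ) (φ := fun _ : Fin n => ℂ) (J i))
  have hq : ∀ k v, q k v = ∑ J : Fin k → Fin n, ((p k (fun i => Pi.single (J i) 1) : ℝ) : ℂ) *
      ∏ i, v i (J i) := by
    intro k v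
    simp [q]
  have hqn : ∀ k, ‖q k‖ ≤ (n : ℝ) ^ k * ‖p k‖ := by
    intro k
    refine ContinuousMultilinearMap.opNorm_le_bound (by positivity) fun v => ?_
    rw [hq]
    refine (norm_sum_le _ _).trans ?_
    have : ∀ J : Fin k → Fin n, ‖((p k (fun i => Pi.single (J i) 1) : ℝ) : ℂ) *
        ∏ i, v i (J i)‖ ≤ ‖p k‖ * ∏ i, ‖v i‖ := by
      intro J
      rw [norm_mul, norm_prod, Complex.norm_real]
      refine mul_le_mul ?_ (Finset.prod_le_prod (fun i _ => norm_nonneg _)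
        fun i _ => norm_le_pi_norm (v i) (J i)) (Finset.prod_nonneg fun i _ => norm_nonneg _)
        (norm_nonneg _)
      refine ((p k).le_opNorm _).trans ?_
      have : ∏ i : Fin k, ‖(Pi.single (J i) 1 : Fin n → ℝ)‖ ≤ 1 := by
        refine Finset.prod_le_one (fun i _ => norm_nonneg _) fun i _ => ?_
        refine (pi_norm_le_iff_of_nonneg zero_le_one).mpr fun l => ?_
        rw [Pi.single_apply]; split_ifs <;> simp
      simpa using mul_le_mul_of_nonneg_left this (norm_nonneg (p k))
    refine (Finset.sum_le_sum fun J _ => this J).trans ?_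
    simp [mul_assoc]
  obtain ⟨C, a, hC, ha, hCa⟩ := p.le_mul_pow_of_radius_pos (hp.r_pos.trans_le hp.r_le)
  have hrad : 0 < q.radius := by
    have hna : (0 : ℝ) < (n : ℝ) * a + 1 := by
      positivity
    obtain ⟨t, ht⟩ : ∃ t : NNReal, (t : ℝ) = ((n : ℝ) * a + 1)⁻¹ :=
      ⟨Real.toNNReal _, Real.coe_toNNReal _ (inv_pos.mpr hna).le⟩
    have ht0 : 0 < t := by
      rw [← NNReal.coe_pos]; rw [ht]; exact inv_pos.mpr hna
    refine lt_of_lt_of_le (ENNReal.coe_pos.mpr ht0) (q.le_radius_of_bound C fun k => ?_)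
    have h1 : (n : ℝ) * a * t ≤ 1 := by
      rw [ht, ← div_eq_mul_inv, div_le_one hna]
      linarith
    calc ‖q k‖ * (t : ℝ) ^ k ≤ (n : ℝ) ^ k * (C * a ^ k) * (t : ℝ) ^ k := by
          gcongr
          exact (hqn k).trans (by gcongr; exact hCa k)
      _ = C * ((n : ℝ) * a * t) ^ k := by rw [mul_pow, mul_pow]; ring
      _ ≤ C * 1 := by
          gcongr
          exact pow_le_one₀ (by positivity) h1
      _ = C := mul_one C
  have hqs := q.hasFPowerSeriesOnBall hrad
  refine ⟨q.sum, hqs.analyticAt, ?_⟩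
  have hcast : ∀ k (x : Fin n → ℝ), q k (fun _ => castV x) = ((p k (fun _ => x) : ℝ) : ℂ) := by
    intro k x
    have hx : x = ∑ i, x i • (Pi.single i 1 : Fin n → ℝ) := pi_eq_sum_univ' x
    have h1 : p k (fun _ => x) = ∑ J : Fin k → Fin n,
        p k (fun i => x (J i) • (Pi.single (J i) 1 : Fin n → ℝ)) := by
      conv_lhs => rw [hx]
      exact (p k).map_sum (fun _ (j : Fin n) => x j • (Pi.single j 1 : Fin n → ℝ))
    rw [hq, h1]
    push_cast
    refine Finset.sum_congr rfl fun J _ => ?_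
    rw [(p k).map_smul_univ]
    simp [castV, mul_comm]
  have h1 : ∀ᶠ x in 𝓝 (0 : Fin n → ℝ), x ∈ Metric.eball (0 : Fin n → ℝ) r :=
    Metric.eball_mem_nhds _ hp.r_pos
  have h2 : ∀ᶠ x in 𝓝 (0 : Fin n → ℝ), castV x ∈ Metric.eball (0 : Fin n → ℂ) q.radius := by
    have : Tendsto (castV : (Fin n → ℝ) → Fin n → ℂ) (𝓝 0) (𝓝 0) :=
      continuous_castV.tendsto' _ _ (by funext i; simp [castV])
    exact this (Metric.eball_mem_nhds _ hrad)
  filter_upwards [h1, h2] with x hx1 hx2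
  have h3 := hp.hasSum hx1
  have h4 := hqs.hasSum hx2
  simp only [zero_add, hcast] at h3 h4
  exact h4.unique (Complex.hasSum_ofReal.mpr h3)

end Complexify


section BaireDisc

lemma aux_baire_disc {n : ℕ} {ι : Type*} (ψ : ι → (Fin n → ℂ) → ℂ) {R : ℝ} (hR : 0 < R) (B : ι → ℝ)
    (hψ : ∀ β, DifferentiableOn ℂ (ψ β) (ball 0 R))
    (H : ∀ a : Fin n → ℝ, ∀ᶠ ζ in 𝓝 (0 : ℂ), ∀ β, ‖ψ β (ζ • castV a)‖ ≤ B β) :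
    ∃ ε > 0, ∀ β, ∀ z ∈ ball (0 : Fin n → ℂ) ε, ‖ψ β z‖ ≤ B β := by
  let S : ℕ → Set (Fin n → ℝ) := fun k => {a | ∀ β, ∀ ζ : ℂ, ‖ζ‖ ≤ 1 / ((k : ℝ) + 1) →
    ‖ζ • castV a‖ < R → ‖ψ β (ζ • castV a)‖ ≤ B β}
  have hclosed : ∀ k, IsClosed (S k) := by
    intro k
    have : S k = ⋂ β, ⋂ ζ : ℂ, ⋂ (_ : ‖ζ‖ ≤ 1 / ((k : ℝ) + 1)),
        {a | ‖ζ • castV a‖ < R → ‖ψ β (ζ • castV a)‖ ≤ B β} := by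
      ext a; simp [S]
    rw [this]
    refine isClosed_iInter fun β => isClosed_iInter fun ζ => isClosed_iInter fun _ => ?_
    rw [← isOpen_compl_iff]
    have hcont : Continuous (fun a : Fin n → ℝ => ζ • castV a) := continuous_castV.const_smul ζ
    have ho : IsOpen {a : Fin n → ℝ | ζ • castV a ∈ ball (0 : Fin n → ℂ) R} :=
      isOpen_ball.preimage hcont
    have hc : ContinuousOn (fun a : Fin n → ℝ => ‖ψ β (ζ • castV a)‖)
        {a : Fin n → ℝ | ζ • castV a ∈ ball (0 : Fin n → ℂ) R} :=
      ((hψ β).continuousOn.comp hcont.continuousOn (fun a ha => ha)).norm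
    convert hc.isOpen_inter_preimage ho (isOpen_Ioi (a := B β)) using 1
    ext a; simp
  have hunion : ⋃ k, S k = univ := by
    refine eq_univ_of_forall fun a => ?_
    obtain ⟨ε, hε, hs⟩ := Metric.eventually_nhds_iff_ball.mp (H a)
    obtain ⟨k, hk⟩ := exists_nat_one_div_lt hε
    refine mem_iUnion.mpr ⟨k, fun β ζ hζ _ => hs ζ ?_ β⟩
    rw [mem_ball_zero_iff]; linarith
  obtain ⟨k, a, ha⟩ := nonempty_interior_of_iUnion_of_closed hclosed hunion
  obtain ⟨δ, hδ, hsub⟩ := Metric.mem_nhds_iff.mp (mem_interior_iff_mem_nhds.mp ha)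
  set ε₁ : ℝ := 1 / ((k : ℝ) + 1) with hε₁
  have hε₁0 : 0 < ε₁ := by positivity
  set ξ : ℝ := min ε₁ (R / (2 * (‖a‖ + δ))) with hξ
  have hξ0 : 0 < ξ := lt_min hε₁0 (by positivity)
  have hξR : ξ * (‖a‖ + δ) < R := by
    have : ξ ≤ R / (2 * (‖a‖ + δ)) := min_le_right _ _
    calc ξ * (‖a‖ + δ) ≤ R / (2 * (‖a‖ + δ)) * (‖a‖ + δ) := by gcongr
      _ = R / 2 := by field_simp
      _ < R := by linarith
  refine ⟨ξ * δ / 4, by positivity, fun β z hz => ?_⟩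
  rw [mem_ball_zero_iff] at hz
  have hξc : (ξ : ℂ) ≠ 0 := by exact_mod_cast hξ0.ne'
  set w : Fin n → ℂ := ((2 : ℂ) / ξ) • z with hw
  have hwn : ‖w‖ < δ / 2 := by
    rw [hw, norm_smul, norm_div, Complex.norm_real, Real.norm_of_nonneg hξ0.le, Complex.norm_ofNat,
      div_mul_eq_mul_div, div_lt_iff₀ hξ0]
    linarith
  set b : Fin n → ℝ := fun i => (w i).re with hb
  set c : Fin n → ℝ := fun i => (w i).im with hc
  have hbn : ‖b‖ ≤ ‖w‖ := (pi_norm_le_iff_of_nonneg (norm_nonneg _)).mpr fun i =>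
    (Complex.abs_re_le_norm (w i)).trans (norm_le_pi_norm w i)
  have hcn : ‖c‖ ≤ ‖w‖ := (pi_norm_le_iff_of_nonneg (norm_nonneg _)).mpr fun i =>
    (Complex.abs_im_le_norm (w i)).trans (norm_le_pi_norm w i)
  let γ : ℂ → Fin n → ℂ := fun η => (ξ : ℂ) • (η • castV a + ((η ^ 2 + 1) / 2) • castV b +
    ((η ^ 2 - 1) / (2 * I)) • castV c)
  have hγd : Differentiable ℂ γ := by
    intro η
    simp only [γ]
    fun_prop
  have hγR : ∀ η ∈ closedBall (0 : ℂ) 1, γ η ∈ ball (0 : Fin n → ℂ) R := by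
    intro η hη
    rw [mem_closedBall_zero_iff] at hη
    rw [mem_ball_zero_iff]
    have h2 : ‖η ^ 2‖ ≤ 1 := by rw [norm_pow]; exact pow_le_one₀ (norm_nonneg _) hη
    have h3 : ‖(η ^ 2 + 1) / 2‖ ≤ 1 := by
      rw [norm_div, Complex.norm_ofNat, div_le_one (by norm_num)]
      refine (norm_add_le _ _).trans ?_
      rw [norm_one]; linarith
    have h4 : ‖(η ^ 2 - 1) / (2 * I)‖ ≤ 1 := by
      rw [norm_div, norm_mul, Complex.norm_ofNat, Complex.norm_I, mul_one, div_le_one (by norm_num)]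
      refine (norm_sub_le _ _).trans ?_
      rw [norm_one]; linarith
    have h5 : ‖η • castV a + ((η ^ 2 + 1) / 2) • castV b + ((η ^ 2 - 1) / (2 * I)) • castV c‖ ≤
        ‖a‖ + ‖b‖ + ‖c‖ := by
      refine (norm_add₃_le).trans ?_
      rw [norm_smul, norm_smul, norm_smul, norm_castV, norm_castV, norm_castV]
      have := norm_nonneg a
      have := norm_nonneg b
      have := norm_nonneg c
      nlinarith
    simp only [γ]
    rw [norm_smul, Complex.norm_real, Real.norm_of_nonneg hξ0.le]
    refine lt_of_le_of_lt (mul_le_mul_of_nonneg_left h5 hξ0.le) (lt_of_le_of_lt ?_ hξR)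
    refine mul_le_mul_of_nonneg_left ?_ hξ0.le
    linarith
  have hbd : ∀ η ∈ frontier (ball (0 : ℂ) 1), ‖ψ β (γ η)‖ ≤ B β := by
    intro η hη
    rw [frontier_ball (0 : ℂ) one_ne_zero] at hη
    have hηn : ‖η‖ = 1 := by simpa using hη
    have hηη : (η.re : ℂ) ^ 2 + (η.im : ℂ) ^ 2 = 1 := by
      have := Complex.sq_norm η
      rw [hηn, Complex.normSq_apply] at this
      have h2 : η.re ^ 2 + η.im ^ 2 = 1 := by nlinarith
      exact_mod_cast h2
    have hηe : η = (η.re : ℂ) + (η.im : ℂ) * I := (Complex.re_add_im η).symm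
    have e1 : (η ^ 2 + 1) / 2 = η * η.re := by
      have h := congrArg (fun t => t) hηe
      generalize (η.re : ℂ) = x at *
      generalize (η.im : ℂ) = y at *
      subst hηe
      linear_combination (-(1 : ℂ) / 2) * hηη + (y ^ 2 / 2) * Complex.I_sq
    have e2 : (η ^ 2 - 1) / (2 * I) = η * η.im := by
      generalize (η.re : ℂ) = x at *
      generalize (η.im : ℂ) = y at *
      subst hηe
      rw [div_eq_iff (by simp [Complex.I_ne_zero])]
      linear_combination hηη - (y ^ 2) * Complex.I_sq
    set a' : Fin n → ℝ := a + η.re • b + η.im • c with ha'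
    have hγe : γ η = ((ξ : ℂ) * η) • castV a' := by
      funext i
      simp only [γ, e1, e2, castV, ha', Pi.smul_apply, Pi.add_apply, smul_eq_mul]
      push_cast
      ring
    have hre : |η.re| ≤ 1 := hηn ▸ Complex.abs_re_le_norm η
    have him : |η.im| ≤ 1 := hηn ▸ Complex.abs_im_le_norm η
    have hmem : a' ∈ ball a δ := by
      rw [mem_ball, dist_eq_norm]
      have : a' - a = η.re • b + η.im • c := by rw [ha']; abel
      rw [this]
      refine lt_of_le_of_lt (norm_add_le _ _) ?_
      rw [norm_smul, norm_smul, Real.norm_eq_abs, Real.norm_eq_abs]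
      have := norm_nonneg b
      have := norm_nonneg c
      nlinarith
    have := hsub hmem β ((ξ : ℂ) * η) (by
      rw [norm_mul, hηn, mul_one, Complex.norm_real, Real.norm_of_nonneg hξ0.le]
      exact min_le_left _ _) (by
      rw [← hγe]
      have := hγR η (sphere_subset_closedBall hη)
      simpa using this)
    rwa [hγe]
  have hdc : DiffContOnCl ℂ (fun η => ψ β (γ η)) (ball 0 1) := by
    refine DifferentiableOn.diffContOnCl ?_
    rw [closure_ball (0 : ℂ) one_ne_zero]
    intro η hη
    exact (((hψ β).differentiableAt (isOpen_ball.mem_nhds (hγR η hη))).comp η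
      (hγd η)).differentiableWithinAt
  have key := Complex.norm_le_of_forall_mem_frontier_norm_le isBounded_ball hdc hbd
    (subset_closure (mem_ball_self one_pos))
  have hγ0 : γ 0 = z := by
    funext i
    have h1 : (castV b i) + (castV c i) * I = w i := Complex.re_add_im (w i)
    have h2 : w i = 2 / ξ * z i := rfl
    simp only [γ, Pi.smul_apply, Pi.add_apply, smul_eq_mul]
    have h3 : ((0 : ℂ) ^ 2 - 1) / (2 * I) = I / 2 := by
      rw [div_eq_iff (by simp [Complex.I_ne_zero])]
      linear_combination (-1 : ℂ) * Complex.I_sq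
    rw [h3]
    have h4 : z i = ξ * (w i) / 2 := by rw [h2]; field_simp
    rw [h4, ← h1]
    ring
  rwa [hγ0] at key

end BaireDisc


section Geometry

lemma aux_parametrize {V : Type*} [NormedAddCommGroup V] [NormedSpace ℂ V] [FiniteDimensional ℂ V]
    (ρ : V → ℝ) (hρ : AnalyticAt ℝ ρ 0) (hρ0 : ρ 0 = 0) (hdρ : fderiv ℝ ρ 0 ≠ 0) :
    ∃ (n : ℕ) (G : (Fin n → ℂ) → V), G 0 = 0 ∧ AnalyticAt ℂ G 0 ∧
      (∀ᶠ x in 𝓝 (0 : Fin n → ℝ), ρ (G (castV x)) = 0) ∧ map G (𝓝 0) = 𝓝 0 := by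
  have : CompleteSpace V := FiniteDimensional.complete ℂ V
  set ℓ := fderiv ℝ ρ 0 with hℓ
  obtain ⟨w, hw⟩ : ∃ w, ℓ w ≠ 0 := by
    by_contra hcon
    push Not at hcon
    exact hdρ (ContinuousLinearMap.ext hcon)
  let n := Module.finrank ℂ V
  let b := Module.finBasis ℂ V
  have hc : ∀ j : Fin n, ∃ c : ℂ, c ≠ 0 ∧ ℓ (c • b j) = 0 := by
    intro j
    by_cases h0 : ℓ (b j) = 0
    · exact ⟨1, one_ne_zero, by simpa using h0⟩
    · refine ⟨(ℓ (I • b j) : ℂ) - (ℓ (b j) : ℂ) * I, ?_, ?_⟩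
      · intro h
        have := congrArg Complex.im h
        simp at this
        exact h0 this
      · rw [sub_smul, mul_smul, map_sub, Complex.coe_smul, Complex.coe_smul, ℓ.map_smul, ℓ.map_smul,
          smul_eq_mul, smul_eq_mul, mul_comm, sub_self]
  choose c hc0 hcℓ using hc
  let e : Fin n → V := fun j => c j • b j
  let S : (Fin n → ℂ) →L[ℂ] V :=
    ∑ j, (ContinuousLinearMap.proj (R := ℂ) (φ := fun _ : Fin n => ℂ) j).smulRight (e j)
  have hS : ∀ z, S z = ∑ j, z j • e j := by
    intro z; simp [S]
  let cV : (Fin n → ℝ) →L[ℝ] (Fin n → ℂ) :=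
    ContinuousLinearMap.pi fun i => Complex.ofRealCLM.comp (ContinuousLinearMap.proj i)
  have hcV : ∀ x, cV x = castV x := fun x => rfl
  let A : (Fin n → ℝ) × ℝ →L[ℝ] V :=
    ((S.restrictScalars ℝ).comp cV).comp (ContinuousLinearMap.fst ℝ _ _) +
      (ContinuousLinearMap.snd ℝ (Fin n → ℝ) ℝ).smulRight w
  have hA : ∀ x τ, A (x, τ) = S (castV x) + τ • w := fun x τ => rfl
  have hℓS : ∀ x, ℓ (S (castV x)) = 0 := by
    intro x
    rw [hS, map_sum]
    refine Finset.sum_eq_zero fun j _ => ?_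
    rw [castV, Complex.coe_smul, map_smul, hcℓ j, smul_zero]
  let Q : (Fin n → ℝ) × ℝ → ℝ := fun p => ρ (A p)
  have hQa : AnalyticAt ℝ Q 0 := by
    refine AnalyticAt.fun_comp ?_ (A.analyticAt 0)
    rwa [map_zero]
  have hQd : HasFDerivAt Q (ℓ.comp A) 0 := by
    refine HasFDerivAt.comp (0 : (Fin n → ℝ) × ℝ) ?_ A.hasFDerivAt
    rw [map_zero]
    exact hρ.differentiableAt.hasFDerivAt
  have hQ0 : Q 0 = 0 := by simp [Q, hρ0]
  have cdf : ContDiffAt ℝ (⊤ : WithTop ℕ∞) Q 0 := hQa.contDiffAt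
  have htop : (⊤ : WithTop ℕ∞) ≠ 0 := by simp
  have hfd : fderiv ℝ Q 0 = ℓ.comp A := hQd.fderiv
  have if₂ : (fderiv ℝ Q 0 ∘L .inr ℝ (Fin n → ℝ) ℝ).IsInvertible := by
    refine ⟨ContinuousLinearEquiv.unitsEquivAut ℝ (Units.mk0 _ hw), ?_⟩
    ext
    rw [hfd]
    simp [hA, hℓS]
  set F := cdf.implicitFunction htop if₂ with hF
  have hF0 : F 0 = 0 := cdf.implicitFunction_apply_self htop if₂
  have hFQ : ∀ᶠ x in 𝓝 (0 : Fin n → ℝ), Q (x, F x) = 0 := by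
    have := cdf.eventually_apply_implicitFunction htop if₂
    simpa [hQ0] using this
  have hFa : AnalyticAt ℝ F 0 := (cdf.contDiffAt_implicitFunction htop if₂).analyticAt
  have hFd : HasFDerivAt F (0 : (Fin n → ℝ) →L[ℝ] ℝ) 0 := by
    have := (cdf.hasStrictFDerivAt_implicitFunction htop if₂).hasFDerivAt
    have h0 : fderiv ℝ Q 0 ∘L .inl ℝ (Fin n → ℝ) ℝ = 0 := by
      ext x
      rw [hfd]
      simp only [ContinuousLinearMap.comp_apply, ContinuousLinearMap.inl_apply, hA, zero_smul,
        add_zero, hℓS, _root_.zero_apply]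
    rw [h0, ContinuousLinearMap.comp_zero, neg_zero] at this
    exact this
  obtain ⟨Fc, hFca, hFce⟩ := aux_complexify hFa
  have hcast0 : castV (0 : Fin n → ℝ) = 0 := by funext i; simp [castV]
  have hFc0 : Fc 0 = 0 := by
    have := hFce.self_of_nhds
    rwa [hcast0, hF0, Complex.ofReal_zero] at this
  have hFcd : fderiv ℂ Fc 0 = 0 := by
    have h1 : HasFDerivAt (fun x => Fc (castV x)) (((fderiv ℂ Fc 0).restrictScalars ℝ).comp cV)
        (0 : Fin n → ℝ) := by
      refine HasFDerivAt.comp (0 : Fin n → ℝ) (g := Fc) (f := cV) ?_ cV.hasFDerivAt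
      rw [map_zero]
      exact hFca.differentiableAt.hasFDerivAt.restrictScalars ℝ
    have h2 : HasFDerivAt (fun x => ((F x : ℝ) : ℂ)) (Complex.ofRealCLM.comp 0)
        (0 : Fin n → ℝ) :=
      Complex.ofRealCLM.hasFDerivAt.comp (0 : Fin n → ℝ) hFd
    have h3 := (h2.congr_of_eventuallyEq hFce).unique h1
    have h4 : ∀ i, fderiv ℂ Fc 0 (Pi.single i 1) = 0 := by
      intro i
      have := congrArg (fun L => L (Pi.single i 1)) h3
      simp only [ContinuousLinearMap.comp_apply, _root_.zero_apply, map_zero,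
        ContinuousLinearMap.coe_restrictScalars', hcV] at this
      rw [this]
      congr 1
      funext k
      simp only [castV, Pi.single_apply]
      split_ifs <;> simp
    refine ContinuousLinearMap.ext fun v => ?_
    rw [pi_eq_sum_univ' v, map_sum]
    refine Finset.sum_eq_zero fun i _ => ?_
    rw [map_smul, h4 i, smul_zero]
  let G : (Fin n → ℂ) → V := fun z => S z + Fc z • w
  have hGa : AnalyticAt ℂ G 0 := (S.analyticAt 0).add (hFca.smul analyticAt_const)
  have hG0 : G 0 = 0 := by simp [G, hFc0]
  refine ⟨n, G, hG0, hGa, ?_, ?_⟩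
  · filter_upwards [hFQ, hFce] with x hx1 hx2
    simp only [G, hx2, Complex.coe_smul]
    rw [← hA]
    exact hx1
  · have hGd : HasFDerivAt G S 0 := by
      have h1 : HasFDerivAt Fc (0 : (Fin n → ℂ) →L[ℂ] ℂ) 0 := hFcd ▸ hFca.differentiableAt.hasFDerivAt
      have := (S.hasFDerivAt (x := (0 : Fin n → ℂ))).add (h1.smul_const w)
      have h2 : S + (0 : (Fin n → ℂ) →L[ℂ] ℂ).smulRight w = S := by
        ext v; simp
      rw [h2] at this
      exact this
    have hGs : HasStrictFDerivAt G S 0 := by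
      have := hGa.hasStrictFDerivAt
      rwa [hGd.fderiv] at this
    have hsurj : S.range = ⊤ := by
      rw [LinearMap.range_eq_top]
      intro v
      refine ⟨fun j => b.repr v j / c j, ?_⟩
      change S _ = v
      rw [hS]
      conv_rhs => rw [← b.sum_repr v]
      refine Finset.sum_congr rfl fun j _ => ?_
      simp only [e]
      rw [smul_smul, div_mul_cancel₀ _ (hc0 j)]
    have := hGs.map_nhds_eq_of_surj hsurj
    rwa [hG0] at this

end Geometry


section Assembly

lemma aux_hasExp {E : Type*} [NormedAddCommGroup E] [NormedSpace ℂ E] {u : ℝ → E}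
    (hu : ContDiffAt ℝ (⊤ : ℕ∞) u 0) : HasExp u := by
  intro q
  have hq : ContDiffAt ℝ q u 0 := hu.of_le (by exact_mod_cast le_top)
  obtain ⟨s, hs, hsu⟩ := hq.contDiffOn (m := q) le_rfl (by simp)
  obtain ⟨δ, hδ, hsub⟩ := Metric.mem_nhds_iff.mp hs
  have ho := taylor_isLittleO (convex_ball (0 : ℝ) δ) (mem_ball_self hδ) (hsu.mono hsub)
  rw [isOpen_ball.nhdsWithin_eq (mem_ball_self hδ)] at ho
  refine ⟨fun z => ∑ k ∈ Finset.range (q + 1), (((Nat.factorial k : ℂ))⁻¹ * z ^ k) •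
    iteratedDerivWithin k u (ball 0 δ) 0, ?_, ?_⟩
  · refine Finset.analyticAt_fun_sum _ fun k _ => ?_
    exact ((analyticAt_const.mul (analyticAt_id.pow k))).smul analyticAt_const
  · refine ((ho.isBigO.mono nhdsWithin_le_nhds).congr ?_ ?_)
    · intro s
      rw [taylor_within_apply]
      congr 1
      refine Finset.sum_congr rfl fun k _ => ?_
      rw [sub_zero, ← Complex.coe_smul]
      push_cast
      rfl
    · intro s; simp

lemma aux_bound {n N : ℕ} {V ι : Type*} [NormedAddCommGroup V] [NormedSpace ℂ V] [CompleteSpace V]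
    {W : Type*} [NormedAddCommGroup W] [NormedSpace ℂ W]
    (e : W ≃L[ℂ] (Fin N → ℂ)) (M : Set V) (h : V → W) (h00 : h 0 = 0)
    (G : (Fin n → ℂ) → V) (hG0 : G 0 = 0) (hGa : AnalyticAt ℂ G 0)
    (hGM : ∀ᶠ x in 𝓝 (0 : Fin n → ℝ), G (castV x) ∈ M)
    (g : Fin N → V → ℂ) (hg : ∀ i, ContDiffAt ℝ (⊤ : ℕ∞) (g i) 0)
    (hgh : ∀ i, ∀ᶠ z in 𝓝 (0 : V), z ∈ M → g i z = e (h z) i)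
    (φ : ι → V → ℂ) (Θ' : ι → W → ℂ) (R r₁ : ℝ) (hR : 0 < R) (hr₁ : 0 < r₁)
    (B : ι → ℝ) (hΘ : ∀ β, DifferentiableOn ℂ (Θ' β) (ball 0 R))
    (hB : ∀ β, ∀ t ∈ ball (0 : W) R, ‖Θ' β t‖ ≤ B β)
    (hφ : ∀ β, DifferentiableOn ℂ (φ β) (ball 0 r₁))
    (hφeq : ∀ β, ∀ t ∈ M ∩ ball (0 : V) r₁, φ β t = Θ' β (h t)) (a : Fin n → ℝ) :
    ∀ᶠ ζ in 𝓝 (0 : ℂ), ∀ β, ‖φ β (G (ζ • castV a))‖ ≤ B β := by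
  have hcast : ∀ s : ℝ, (s : ℂ) • castV a = castV (s • a) := by
    intro s; funext i; simp [castV]
  let c : ℂ → V := fun ζ => G (ζ • castV a)
  have hc0 : c 0 = 0 := by simp [c, hG0]
  have hlin : AnalyticAt ℂ (fun ζ : ℂ => ζ • castV a) 0 := analyticAt_id.smul analyticAt_const
  have hca : AnalyticAt ℂ c 0 := by
    refine AnalyticAt.fun_comp ?_ hlin
    simpa using hGa
  have hcc : Tendsto c (𝓝 0) (𝓝 0) := by
    have := hca.continuousAt.tendsto
    rwa [hc0] at this
  have hcR : ContDiffAt ℝ (⊤ : ℕ∞) (fun s : ℝ => c s) 0 := by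
    have h1 : ContDiffAt ℝ (⊤ : ℕ∞) c ((0 : ℝ) : ℂ) := by
      rw [Complex.ofReal_zero]
      exact hca.contDiffAt.restrict_scalars ℝ
    exact h1.comp (0 : ℝ) Complex.ofRealCLM.contDiff.contDiffAt
  have hcM : ∀ᶠ s : ℝ in 𝓝 (0 : ℝ), c s ∈ M := by
    have h1 : Tendsto (fun s : ℝ => s • a) (𝓝 0) (𝓝 0) := by
      have : Continuous fun s : ℝ => s • a := by fun_prop
      simpa using this.tendsto 0
    filter_upwards [h1.eventually hGM] with s hs
    simpa only [c, hcast] using hs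
  have hof : Tendsto (fun s : ℝ => (s : ℂ)) (𝓝 0) (𝓝 0) :=
    Complex.continuous_ofReal.tendsto' _ _ Complex.ofReal_zero
  have hcs : Tendsto (fun s : ℝ => c s) (𝓝 0) (𝓝 0) := hcc.comp hof
  let u : ℝ → Fin N → ℂ := fun s i => g i (c s)
  have hus : ContDiffAt ℝ (⊤ : ℕ∞) u 0 := by
    rw [contDiffAt_pi]
    intro i
    have h1 : ContDiffAt ℝ (⊤ : ℕ∞) (g i) (c ((0 : ℝ) : ℂ)) := by
      rw [Complex.ofReal_zero, hc0]; exact hg i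
    exact h1.comp (0 : ℝ) hcR
  have hue : ∀ᶠ s : ℝ in 𝓝 (0 : ℝ), u s = e (h (c s)) := by
    have h1 : ∀ᶠ z in 𝓝 (0 : V), ∀ i, z ∈ M → g i z = e (h z) i := eventually_all.mpr hgh
    filter_upwards [hcs.eventually h1, hcM] with s hs1 hs2
    funext i
    exact hs1 i hs2
  have hu0 : u 0 = 0 := by
    rw [hue.self_of_nhds, Complex.ofReal_zero, hc0, h00, map_zero]
  have hut : Tendsto u (𝓝 0) (𝓝 0) := by
    have := hus.continuousAt.tendsto
    rwa [hu0] at this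
  have hev : ∀ᶠ p in 𝓝 (0 : ℂ × (Fin N → ℂ)), e.symm p.2 ∈ ball (0 : W) R ∧
      c p.1 ∈ ball (0 : V) r₁ ∧ DifferentiableAt ℂ c p.1 := by
    have h1 : Tendsto (fun p : ℂ × (Fin N → ℂ) => e.symm p.2) (𝓝 0) (𝓝 0) := by
      have : Continuous fun p : ℂ × (Fin N → ℂ) => e.symm p.2 := by fun_prop
      exact this.tendsto' _ _ (by simp)
    have h2 : Tendsto (fun p : ℂ × (Fin N → ℂ) => p.1) (𝓝 0) (𝓝 0) :=
      continuous_fst.tendsto' _ _ rfl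
    have h3 : ∀ᶠ ζ in 𝓝 (0 : ℂ), DifferentiableAt ℂ c ζ :=
      hca.eventually_analyticAt.mono fun ζ hζ => hζ.differentiableAt
    exact (h1.eventually (ball_mem_nhds _ hR)).and
      ((h2.eventually (hcc.eventually (ball_mem_nhds _ hr₁))).and (h2.eventually h3))
  obtain ⟨ρ, hρ, hρs⟩ := Metric.eventually_nhds_iff_ball.mp hev
  have key := aux_artin N (fun β p => Θ' β (e.symm p.2) - φ β (c p.1)) ρ hρ (by
      intro β p hp
      obtain ⟨h1, h2, h3⟩ := hρs p hp
      refine DifferentiableAt.differentiableWithinAt (DifferentiableAt.sub ?_ ?_)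
      · have hA := (hΘ β).differentiableAt (isOpen_ball.mem_nhds h1)
        exact hA.comp p (e.symm.differentiableAt.comp p differentiableAt_snd)
      · have hA := (hφ β).differentiableAt (isOpen_ball.mem_nhds h2)
        exact hA.comp p (h3.comp p differentiableAt_fst)) u (aux_hasExp hus)
    (hut.mono_left nhdsWithin_le_nhds) (by
      intro β q
      have h1 : (fun s : ℝ => Θ' β (e.symm (u s)) - φ β (c s)) =ᶠ[RL] fun _ => 0 := by
        refine Filter.Eventually.filter_mono nhdsWithin_le_nhds ?_
        filter_upwards [hue, hcM, hcs.eventually (ball_mem_nhds _ hr₁)] with s hs1 hs2 hs3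
        rw [hs1, e.symm_apply_apply, hφeq β _ ⟨hs2, hs3⟩, sub_self]
      exact h1.trans_isBigO (Asymptotics.isBigO_zero _ _))
  filter_upwards [key] with ζ hζ β
  obtain ⟨y, hy, hy2⟩ := hζ
  rw [← sub_eq_zero.mp (hy2 β)]
  exact hB β _ (hρs _ hy).1

end Assembly

/-!
STATEMENT 18 (Lemma 7.10). Let `Θ'_{w_{q'},x_{q'},β}(h(t))`, `β ∈ ℕ^{n-1}`, be
the components of a reflection function associated with a `C^∞` CR mapping `h`
(`h(0) = 0`, `0 ∈ M`) and a normally convergent defining series `d` for `M'`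
(so `z̄' = Σ_β w̄'^β Θ'_β(t')`), and assume that each component extends as a
holomorphic function `φ_β` in a neighborhood of `0` — hence the formal power
series `h_F` of `h` at `0` satisfies `Θ'_β(h_F(t)) ≡ φ_β(t)` for all `β`, and
the Artin approximation theorem produces a convergent `H` with
`Θ'_β(H(t)) ≡ φ_β(t)`.  Then there exist constants `C₀ > 0` and `r₀ > 0` such
that `|φ_β(t)| < C₀^{|β|+1}` for all `|t| < r₀` and all `β`.
-/
theorem cauchy_estimates_for_extended_components
    (m : ℕ) (hm : 1 ≤ m) (M M' : Set (CS m))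
    (hM : IsRealAnalyticHypersurface M) (hM' : IsRealAnalyticHypersurface M')
    (h : CS m → CS m) (hCR : IsCRMapOn (⊤ : ℕ∞) M M' h)
    (h0M : (0 : CS m) ∈ M) (h00 : h 0 = 0)
    (d : DefData m) (hd : d.IsDefiningSeriesOf M')
    (r₁ : ℝ) (hr₁ : 0 < r₁)
    (φ : (Fin m → ℕ) → CS m → ℂ)
    (hφhol : ∀ β, DifferentiableOn ℂ (φ β) (ball (0 : CS m) r₁))
    (hφeq : ∀ β, ∀ t ∈ M ∩ ball (0 : CS m) r₁, φ β t = d.Θ β (h t)) :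
    ∃ C₀ r₀ : ℝ, 0 < C₀ ∧ 0 < r₀ ∧
      ∀ β : Fin m → ℕ, ∀ t ∈ ball (0 : CS m) r₀,
        ‖φ β t‖ < C₀ ^ (mdeg β + 1) := by
  obtain ⟨hr, hC, hΘ, hB, -, -⟩ := hd
  obtain ⟨U, ρ, hU, h0U, hρa, hρd, hMU⟩ := hM.2 0 h0M
  have hρ0 : ρ 0 = 0 := by
    have : (0 : CS m) ∈ {z ∈ U | ρ z = 0} := hMU ▸ ⟨h0M, h0U⟩
    exact this.2
  obtain ⟨n, G, hG0, hGa, hGρ, hGmap⟩ := aux_parametrize ρ (hρa 0 h0U) hρ0 hρd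
  have hGt : Tendsto G (𝓝 0) (𝓝 0) := hGmap.le
  have hGM : ∀ᶠ x in 𝓝 (0 : Fin n → ℝ), G (castV x) ∈ M := by
    have h1 : Tendsto (castV : (Fin n → ℝ) → Fin n → ℂ) (𝓝 0) (𝓝 0) :=
      continuous_castV.tendsto' _ _ (by funext i; simp [castV])
    filter_upwards [hGρ, (hGt.comp h1).eventually (hU.mem_nhds h0U)] with x hx1 hx2
    have : G (castV x) ∈ M ∩ U := by
      rw [hMU]; exact ⟨hx2, hx1⟩
    exact this.1
  let N := Module.finrank ℂ (CS m)
  let e : CS m ≃L[ℂ] (Fin N → ℂ) := ContinuousLinearEquiv.ofFinrankEq (by simp [N])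
  have hg : ∀ i : Fin N, ∃ g : CS m → ℂ, ContDiffAt ℝ (⊤ : ℕ∞) g 0 ∧
      ∀ᶠ z in 𝓝 (0 : CS m), z ∈ M → g z = e (h z) i := by
    intro i
    obtain ⟨U', g, hU', h0U', hgc, hge, -⟩ := hCR.2
      ((ContinuousLinearMap.proj (R := ℂ) (φ := fun _ : Fin N => ℂ) i).comp
        (e : CS m →L[ℂ] (Fin N → ℂ))) 0 h0M
    refine ⟨g, hgc.contDiffAt (hU'.mem_nhds h0U'), ?_⟩
    filter_upwards [hU'.mem_nhds h0U'] with z hz hzM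
    exact hge z ⟨hzM, hz⟩
  choose g hgc hge using hg
  have key := aux_bound e M h h00 G hG0 hGa hGM g hgc hge φ d.Θ (2 * d.r) r₁ (by positivity) hr₁
    (fun β => d.C / (2 * d.r) ^ mdeg β) hΘ hB hφhol hφeq
  obtain ⟨r₂, hr₂, hr₂s⟩ := Metric.eventually_nhds_iff_ball.mp
    ((hGa.eventually_analyticAt.mono fun ζ hζ => hζ.differentiableAt).and
      (hGt.eventually (ball_mem_nhds (0 : CS m) hr₁)))
  obtain ⟨ε, hε, hεb⟩ := aux_baire_disc (fun β z => φ β (G z)) hr₂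
    (fun β => d.C / (2 * d.r) ^ mdeg β) (by
      intro β z hz
      obtain ⟨h1, h2⟩ := hr₂s z hz
      exact (((hφhol β).differentiableAt (isOpen_ball.mem_nhds h2)).comp z
        h1).differentiableWithinAt) key
  have himg : G '' ball 0 ε ∈ 𝓝 (0 : CS m) := by
    rw [← hGmap]; exact image_mem_map (ball_mem_nhds _ hε)
  obtain ⟨r₀, hr₀, hsub⟩ := Metric.mem_nhds_iff.mp himg
  have hq : 0 < 1 / (2 * d.r) := by positivity
  refine ⟨d.C + 1 / (2 * d.r) + 1, r₀, by positivity, hr₀, fun β t ht => ?_⟩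
  obtain ⟨z, hz, rfl⟩ := hsub ht
  refine lt_of_le_of_lt (hεb β z hz) ?_
  have h1 : d.C / (2 * d.r) ^ mdeg β = (1 / (2 * d.r)) ^ mdeg β * d.C := by
    rw [one_div, inv_pow]; field_simp
  rw [h1, pow_succ]
  refine mul_lt_mul' (pow_le_pow_left₀ hq.le (by linarith) _) (by linarith) hC.le (by positivity)
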